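/- arXiv:2111.12850 — 3 statements merged into one kernel-verified Lean document; each statement's English description precedes it below -/
import Mathlib

section
/- Let T_{k,p}(n) denote the expected number of random k-Naples parking functions on n cars. Then for n ≥ 1, T_{k,p}(n) = Σ_{i=0}^{n-1} C(n−1, i) · T_{k,p}(i) · (n−i)^{n−i−2} · (i + 1 + p·min{k, n−i−1}), with T_{k,p}(0) = 1. -/
/-- The first spot in the list `l` not in `occ`, if any. -/
def firstFree (occ : Finset ℕ) (l : List ℕ) : Option ℕ :=
  l.find? (fun s => decide (s ∉ occ))

/-- Run a parking simulation: each car is a pair (preference, coin); `step`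
decides where a car parks (or `none` if it fails). Returns `true` iff all cars park. -/
def runPark (step : Finset ℕ → ℕ → Bool → Option ℕ) :
    List (ℕ × Bool) → Finset ℕ → Bool
  | [], _ => true
  | (a, b) :: rest, occ =>
    match step occ a b with
    | none => false
    | some s => runPark step rest (insert s occ)

/-- Run a parking simulation, returning the final set of occupied spots
(cars that fail to park simply do not park). -/
def runOcc (step : Finset ℕ → ℕ → Bool → Option ℕ) :
    List (ℕ × Bool) → Finset ℕ → Finset ℕ
  | [], occ => occ
  | (a, b) :: rest, occ =>
    match step occ a b with
    | none => runOcc step rest occ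
    | some s => runOcc step rest (insert s occ)

/-- Random-direction step on spots `1,…,n`: if the preferred spot `a` is free, take it;
otherwise if the coin says forward, take the first free spot among `a+1,…,n`;
otherwise take the first free spot among `a-1,…,1`. -/
def dirStep (n : ℕ) (occ : Finset ℕ) (a : ℕ) (fwd : Bool) : Option ℕ :=
  if a ∉ occ then some a
  else if fwd then firstFree occ (List.range' (a + 1) (n - a))
  else firstFree occ ((List.range' 1 (a - 1)).reverse)

/-- Random `k`-Naples step on spots `1,…,n`: if the preferred spot `a` is free, take it;
otherwise, if the coin says to back up, check spots `a-1, a-2, …, max(a-k,1)` one by one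
taking the first free one; if none (or if the coin says not to back up), take the first
free spot among `a+1,…,n`. -/
def naplesStep (n k : ℕ) (occ : Finset ℕ) (a : ℕ) (back : Bool) : Option ℕ :=
  if a ∉ occ then some a
  else
    let fwd := firstFree occ (List.range' (a + 1) (n - a))
    if back then
      match firstFree occ ((List.range' (max (a - k) 1) (min k (a - 1))).reverse) with
      | some s => some s
      | none => fwd
    else fwd

/-- Circular random-direction step on spots `1,…,n+1` arranged in a circle:
if the preferred spot `a` is free, take it; otherwise search clockwise
(`a+1, a+2, …` wrapping around) or counterclockwise according to the coin. -/
def circStep (n : ℕ) (occ : Finset ℕ) (a : ℕ) (cw : Bool) : Option ℕ :=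
  if a ∉ occ then some a
  else if cw then
    firstFree occ (List.range' (a + 1) (n + 1 - a) ++ List.range' 1 (a - 1))
  else
    firstFree occ ((List.range' 1 (a - 1)).reverse ++ (List.range' (a + 1) (n + 1 - a)).reverse)

/-- Whether all `n` cars with preferences `α` park in the random-direction model on spots
`1,…,n` with coins `b` (`b i = true` means car `i` searches forward when its spot is taken). -/
def parksDir (n : ℕ) (α : Fin n → ℕ) (b : Fin n → Bool) : Bool :=
  runPark (dirStep n) (List.ofFn (fun i => (α i, b i))) ∅

/-- Whether all `n` cars with preferences `α` park in the `k`-Naples model on spots `1,…,n`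
with coins `b` (`b i = true` means car `i` backs up when its spot is taken). -/
def parksNaples (n k : ℕ) (α : Fin n → ℕ) (b : Fin n → Bool) : Bool :=
  runPark (naplesStep n k) (List.ofFn (fun i => (α i, b i))) ∅

/-- The probability that all cars park in the random-direction model, where each car
whose spot is taken independently searches forward with probability `p` and backward
with probability `1 - p`. -/
noncomputable def probDir (n : ℕ) (p : ℝ) (α : Fin n → ℕ) : ℝ :=
  ∑ b : Fin n → Bool,
    (∏ i, if b i then p else 1 - p) * (if parksDir n α b then 1 else 0)

/-- The probability that all cars park in the random `k`-Naples model, where each car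
whose spot is taken independently backs up (up to) `k` spots with probability `p`. -/
noncomputable def probNaples (n k : ℕ) (p : ℝ) (α : Fin n → ℕ) : ℝ :=
  ∑ b : Fin n → Bool,
    (∏ i, if b i then p else 1 - p) * (if parksNaples n k α b then 1 else 0)

/-- The deterministic 1-Naples simulation for choices `β = (β₂,…,βₙ) ∈ {0,1}^{n-1}`:
car `i ≥ 2` backs up one spot first iff `β i = false` (i.e. `βᵢ = 0`); car 1's choice
is irrelevant since its preferred spot is always free. -/
def parksUnder (n : ℕ) (α : Fin n → ℕ) (β : Fin (n - 1) → Bool) : Bool :=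
  parksNaples n 1 α
    (fun i => if h : 0 < i.1 then !(β ⟨i.1 - 1, by have := i.2; omega⟩) else false)

/-- `g α`: the number of choice sequences `β ∈ {0,1}^{n-1}` under which `α` parks in the
deterministic 1-Naples simulation. -/
def g (n : ℕ) (α : Fin n → ℕ) : ℕ :=
  (Finset.univ.filter (fun β : Fin (n - 1) → Bool => parksUnder n α β = true)).card

/-- `α` is a parking function: every car parks when each car whose preferred spot is taken
only searches forward. -/
def forwardParks (n : ℕ) (α : Fin n → ℕ) : Bool :=
  parksNaples n 0 α (fun _ => false)

/-- `α` is a 1-Naples parking function: every car parks when each car whose preferred spot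
is taken always backs up one spot first. -/
def naplesParks (n : ℕ) (α : Fin n → ℕ) : Bool :=
  parksNaples n 1 α (fun _ => true)

/-- The expected number of random `k`-Naples parking functions on `n` cars. -/
noncomputable def T (k : ℕ) (p : ℝ) (n : ℕ) : ℝ :=
  ∑ α : Fin n → Fin n, probNaples n k p (fun i => (α i).1 + 1)

/-- The staircase preference list: `m t` copies of `t`, then `m (t-1)` copies of `t-1`,
…, down to `m 2` copies of `2`. -/
def stair (t : ℕ) (m : ℕ → ℕ) : List ℕ :=
  ((List.range' 2 (t - 1)).reverse).flatMap (fun j => List.replicate (m j) j)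

/-- The staircase condition on a preference tuple: `α₁ = α₂`, each entry decreases by
`0` or `1`, and `αₙ = 2`. -/
def Staircase {n : ℕ} (hn : 2 ≤ n) (α : Fin n → ℕ) : Prop :=
  α ⟨0, by omega⟩ = α ⟨1, by omega⟩ ∧
  (∀ i : ℕ, (h : i + 1 < n) →
    α ⟨i + 1, h⟩ = α ⟨i, by omega⟩ ∨ α ⟨i + 1, h⟩ + 1 = α ⟨i, by omega⟩) ∧
  α ⟨n - 1, by omega⟩ = 2

/-- The number of 1-Naples parking functions on `n` cars. -/
def Nnum (n : ℕ) : ℕ :=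
  (Finset.univ.filter
    (fun α : Fin n → Fin n => naplesParks n (fun i => (α i).1 + 1) = true)).card

/-!
The expected number of parking functions is the total weight of the orders in which the spots can
be filled, where putting a car on the free spot `x` has as weight the expected number of preferences
leading there. This weight only depends on the maximal occupied run around `x`, so conditioning on
the spot `i + 1` of the last car splits the street into two independent blocks whose fillings are
shuffled in `(n - 1).choose i` ways. The left block is a shorter street, on which backing up past
spot `1` costs nothing. The right block has a free spot on its left; there the preferences lost by
backing up out of the block and those gained from it cancel by symmetry, and Abel's binomial
identity gives `(m + 1) ^ (m - 1)` for a block of length `m`, as without backing up.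
-/

section RandomNaples

open Finset

section AbelIdentity

variable {R : Type*} [CommRing R]

/-- The Abel polynomials `x (x + n) ^ (n - 1)`, with value `1` at `n = 0`, from Abel's
generalization of the binomial theorem. -/
def abelPoly (x : R) : ℕ → R
  | 0 => 1
  | n + 1 => x * (x + (n + 1 : ℕ)) ^ n

theorem abelPoly_one (n : ℕ) : abelPoly (1 : R) n = ((n + 1 : ℕ) : R) ^ (n - 1) := by
  cases n with
  | zero => simp [abelPoly]
  | succ n => rw [abelPoly, one_mul, Nat.cast_add_one (n + 1), add_comm, Nat.add_sub_cancel]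

theorem abelPoly_mul_add_cast (x : R) (n : ℕ) :
    abelPoly x n * (x + n) = x * (x + n) ^ n := by
  cases n with
  | zero => simp [abelPoly]
  | succ n => rw [abelPoly, mul_assoc, ← pow_succ]

theorem abelPoly_mul_add_cast_pow {i j m : ℕ} (h : i + j = m + 1) (x : R) :
    abelPoly x i * (x + i) ^ j = x * (x + i) ^ m := by
  cases j with
  | zero =>
    obtain rfl : i = m + 1 := h
    rw [abelPoly, pow_zero, mul_one]
  | succ j =>
    obtain rfl : i + j = m := by omega
    rw [pow_succ', ← mul_assoc, abelPoly_mul_add_cast, mul_assoc, pow_add]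

theorem sum_antidiagonal_choose_mul_neg_one_pow_mul_pow_eq_zero {m n : ℕ} (h : m < n) (x : R) :
    ∑ ij ∈ antidiagonal n, (n.choose ij.1 : R) * ((-1) ^ ij.2 * (x + ij.1) ^ m) = 0 := by
  have hdiff := congrFun (fwdDiff_iter_pow_eq_zero_of_lt (R := R) h) x
  rw [fwdDiff_iter_eq_sum_shift] at hdiff
  rw [Finset.Nat.sum_antidiagonal_eq_sum_range_succ
    (fun i j => (n.choose i : R) * ((-1) ^ j * (x + i) ^ m))]
  simpa [mul_left_comm, mul_assoc] using hdiff

theorem sum_antidiagonal_choose_mul_abelPoly_mul_neg_pow (x : R) (n : ℕ) :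
    ∑ ij ∈ antidiagonal n, (n.choose ij.1 : R) * (abelPoly x ij.1 * (-(x + ij.1)) ^ ij.2) =
      0 ^ n := by
  cases n with
  | zero => simp [abelPoly]
  | succ n =>
    have hterm : ∀ ij ∈ antidiagonal (n + 1),
        ((n + 1).choose ij.1 : R) * (abelPoly x ij.1 * (-(x + ij.1)) ^ ij.2) =
          x * (((n + 1).choose ij.1 : R) * ((-1) ^ ij.2 * (x + ij.1) ^ n)) := by
      intro ij hij
      have hA := abelPoly_mul_add_cast_pow (HasAntidiagonal.mem_antidiagonal.1 hij) x
      rw [neg_pow]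
      linear_combination ((n + 1).choose ij.1 : R) * (-1) ^ ij.2 * hA
    rw [sum_congr rfl hterm, ← mul_sum,
      sum_antidiagonal_choose_mul_neg_one_pow_mul_pow_eq_zero n.lt_succ_self, mul_zero,
      zero_pow n.succ_ne_zero]

theorem add_choose_mul_choose_comm (i q t : ℕ) :
    (i + (q + t)).choose i * (q + t).choose q = (q + (i + t)).choose q * (i + t).choose i := by
  have hi := Nat.choose_mul (n := i + (q + t)) (Nat.le_add_right i q)
  have hq := Nat.choose_mul (n := i + (q + t)) (Nat.le_add_left q i)
  rw [Nat.add_sub_cancel_left, Nat.add_sub_cancel_left] at hi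
  rw [Nat.add_sub_cancel, ← Nat.choose_symm_add, hi, Nat.add_left_comm i q t,
    Nat.add_sub_cancel_left] at hq
  rwa [Nat.add_left_comm i q t]

theorem sum_antidiagonal_choose_choose_comm (f : ℕ → ℕ → ℕ → R) (n : ℕ) :
    ∑ ij ∈ antidiagonal n, (n.choose ij.1 : R) *
        ∑ qt ∈ antidiagonal ij.2, (ij.2.choose qt.1 : R) * f ij.1 qt.1 qt.2 =
      ∑ ij ∈ antidiagonal n, (n.choose ij.1 : R) *
        ∑ qt ∈ antidiagonal ij.2, (ij.2.choose qt.1 : R) * f qt.1 ij.1 qt.2 := by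
  simp only [mul_sum, sum_sigma']
  refine sum_nbij' (fun z => ⟨(z.2.1, z.1.1 + z.2.2), (z.1.1, z.2.2)⟩)
    (fun z => ⟨(z.2.1, z.1.1 + z.2.2), (z.1.1, z.2.2)⟩) ?_ ?_ ?_ ?_ ?_
  · simp only [mem_sigma, HasAntidiagonal.mem_antidiagonal, and_true]; omega
  · simp only [mem_sigma, HasAntidiagonal.mem_antidiagonal, and_true]; omega
  · rintro ⟨⟨i, j⟩, q, t⟩ h
    simp only [mem_sigma, HasAntidiagonal.mem_antidiagonal] at h
    simp [h.2]
  · rintro ⟨⟨i, j⟩, q, t⟩ h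
    simp only [mem_sigma, HasAntidiagonal.mem_antidiagonal] at h
    simp [h.2]
  · rintro ⟨⟨i, j⟩, q, t⟩ h
    simp only [mem_sigma, HasAntidiagonal.mem_antidiagonal] at h
    obtain ⟨rfl, rfl⟩ := h
    rw [← mul_assoc, ← mul_assoc, ← Nat.cast_mul, ← Nat.cast_mul, add_choose_mul_choose_comm,
      Nat.add_left_comm q i t]

theorem sum_antidiagonal_choose_mul_abelPoly_mul_pow (x y : R) (n : ℕ) :
    ∑ ij ∈ antidiagonal n, (n.choose ij.1 : R) * (abelPoly x ij.1 * (y + ij.2) ^ ij.2) =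
      (x + y + n) ^ n := by
  -- Around `x + y + n` the expansion of `(y + j) ^ j` is in powers of `-(x + i)`, so that
  -- exchanging the sums kills every term except `(x + y + n) ^ n`.
  have hexpand : ∀ ij ∈ antidiagonal n, abelPoly x ij.1 * (y + ij.2) ^ ij.2 =
      ∑ qt ∈ antidiagonal ij.2, (ij.2.choose qt.1 : R) *
        (abelPoly x ij.1 * ((x + y + n) ^ qt.1 * (-(x + ij.1)) ^ qt.2)) := by
    intro ij hij
    have hy : y + (ij.2 : R) = (x + y + n) + -(x + ij.1) := by
      rw [← HasAntidiagonal.mem_antidiagonal.1 hij]; push_cast; ring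
    rw [hy, (Commute.all _ _).add_pow', mul_sum]
    exact sum_congr rfl fun qt _ => by rw [nsmul_eq_mul]; ring
  calc
    _ = ∑ ij ∈ antidiagonal n, (n.choose ij.1 : R) * ∑ qt ∈ antidiagonal ij.2,
          (ij.2.choose qt.1 : R) *
            (abelPoly x ij.1 * ((x + y + n) ^ qt.1 * (-(x + ij.1)) ^ qt.2)) :=
      sum_congr rfl fun ij hij => by rw [hexpand ij hij]
    _ = ∑ qj ∈ antidiagonal n, (n.choose qj.1 : R) * ∑ it ∈ antidiagonal qj.2,
          (qj.2.choose it.1 : R) *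
            (abelPoly x it.1 * ((x + y + n) ^ qj.1 * (-(x + it.1)) ^ it.2)) :=
      sum_antidiagonal_choose_choose_comm
        (fun i q t => abelPoly x i * ((x + y + n) ^ q * (-(x + i)) ^ t)) n
    _ = ∑ qj ∈ antidiagonal n, n.choose qj.1 • ((x + y + n) ^ qj.1 * 0 ^ qj.2) :=
      sum_congr rfl fun qj _ => by
        rw [← sum_antidiagonal_choose_mul_abelPoly_mul_neg_pow x qj.2, nsmul_eq_mul,
          mul_sum _ _ ((x + y + n) ^ qj.1)]
        exact congrArg _ (sum_congr rfl fun it _ => by ring)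
    _ = (x + y + n) ^ n := by rw [← (Commute.all _ _).add_pow', add_zero]

theorem sum_antidiagonal_choose_mul_abelPoly_one_mul_abelPoly_one (n : ℕ) :
    ∑ ij ∈ antidiagonal n,
        (n.choose ij.1 : R) * (abelPoly 1 ij.1 * abelPoly 1 ij.2) * (ij.1 + 1) =
      abelPoly 1 (n + 1) := by
  have hterm : ∀ ij ∈ antidiagonal n,
      (n.choose ij.1 : R) * (abelPoly 1 ij.1 * abelPoly 1 ij.2) * (ij.1 + 1) =
        n.choose ij.2 * (abelPoly 1 ij.2 * (1 + ij.1) ^ ij.1) := by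
    intro ij hij
    rw [← Nat.choose_symm_of_eq_add (HasAntidiagonal.mem_antidiagonal.1 hij).symm]
    linear_combination (n.choose ij.1 : R) * abelPoly 1 ij.2 * abelPoly_mul_add_cast (1 : R) ij.1
  calc
    _ = ∑ ij ∈ antidiagonal n, (n.choose ij.2 : R) * (abelPoly 1 ij.2 * (1 + ij.1) ^ ij.1) :=
      sum_congr rfl hterm
    _ = ∑ ij ∈ antidiagonal n, (n.choose ij.1 : R) * (abelPoly 1 ij.1 * (1 + ij.2) ^ ij.2) :=
      Finset.Nat.sum_antidiagonal_swap
        (f := fun ij => (n.choose ij.1 : R) * (abelPoly 1 ij.1 * (1 + ij.2) ^ ij.2))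
    _ = (1 + 1 + n) ^ n :=
      sum_antidiagonal_choose_mul_abelPoly_mul_pow 1 1 n
    _ = abelPoly 1 (n + 1) := by rw [abelPoly]; push_cast; ring

theorem sum_antidiagonal_choose_mul_mul_sub_eq_zero (f g : ℕ → R) (n : ℕ) :
    ∑ ij ∈ antidiagonal n, (n.choose ij.1 : R) * (g ij.1 * g ij.2) * (f ij.2 - f ij.1) = 0 := by
  simp only [mul_sub, sum_sub_distrib]
  rw [sub_eq_zero, ← Finset.Nat.sum_antidiagonal_swap]
  refine sum_congr rfl fun ij hij => ?_
  rw [Prod.fst_swap, Prod.snd_swap, mul_comm (g ij.2),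
    Nat.choose_symm_of_eq_add (HasAntidiagonal.mem_antidiagonal.1 hij).symm]

end AbelIdentity

section FillWeight

variable {α R : Type*} [DecidableEq α] [CommSemiring R]

/-- If `w S x` is the weight of putting `x` into a set already filled to `S`, then
`fillWeight w S` is the total weight of all orders in which `S` can be filled from `∅`. The
recursion removes the last element of the order. -/
def fillWeight (w : Finset α → α → R) (S : Finset α) : R :=
  if S = ∅ then 1 else ∑ x ∈ S.attach, fillWeight w (S.erase x) * w (S.erase x) x
termination_by #S
decreasing_by exact card_erase_lt_of_mem x.2

variable {w : Finset α → α → R}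

theorem fillWeight_empty : fillWeight w ∅ = 1 := by
  rw [fillWeight, if_pos rfl]

theorem fillWeight_of_nonempty {S : Finset α} (hS : S.Nonempty) :
    fillWeight w S = ∑ x ∈ S, fillWeight w (S.erase x) * w (S.erase x) x := by
  rw [fillWeight, if_neg hS.ne_empty,
    sum_attach S fun x => fillWeight w (S.erase x) * w (S.erase x) x]

theorem sum_powersetCard_succ_fillWeight_mul {U : Finset α} {g h : Finset α → R}
    (hgh : ∀ S ⊆ U, h S = ∑ x ∈ U \ S, w S x * g (insert x S)) (j : ℕ) :
    ∑ S ∈ powersetCard (j + 1) U, fillWeight w S * g S =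
      ∑ S ∈ powersetCard j U, fillWeight w S * h S := by
  have hlast : ∀ S ∈ powersetCard (j + 1) U, fillWeight w S * g S =
      ∑ x ∈ S, fillWeight w (S.erase x) * w (S.erase x) x * g S := by
    intro S hS
    rw [fillWeight_of_nonempty (card_pos.1 ((mem_powersetCard.1 hS).2 ▸ j.succ_pos)), sum_mul]
  have hnext : ∀ S ∈ powersetCard j U, fillWeight w S * h S =
      ∑ x ∈ U \ S, fillWeight w S * w S x * g (insert x S) := by
    intro S hS
    rw [hgh S (mem_powersetCard.1 hS).1, mul_sum]
    exact sum_congr rfl fun x _ => (mul_assoc _ _ _).symm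
  rw [sum_congr rfl hlast, sum_congr rfl hnext, sum_sigma', sum_sigma']
  refine sum_bij' (fun z _ => ⟨z.1.erase z.2, z.2⟩) (fun z _ => ⟨insert z.2 z.1, z.2⟩)
    ?_ ?_ ?_ ?_ ?_
  · rintro ⟨S, x⟩ hz
    simp only [mem_sigma, mem_powersetCard, mem_sdiff, mem_erase] at hz ⊢
    obtain ⟨⟨hSU, hcard⟩, hx⟩ := hz
    exact ⟨⟨(erase_subset _ _).trans hSU, by rw [card_erase_of_mem hx, hcard]; rfl⟩, hSU hx,
      fun hx' => hx'.1 rfl⟩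
  · rintro ⟨S, x⟩ hz
    simp only [mem_sigma, mem_powersetCard, mem_sdiff] at hz ⊢
    obtain ⟨⟨hSU, hcard⟩, hxU, hx⟩ := hz
    exact ⟨⟨insert_subset hxU hSU, by rw [card_insert_of_notMem hx, hcard]⟩, mem_insert_self x S⟩
  · rintro ⟨S, x⟩ hz
    simp only [insert_erase (mem_sigma.1 hz).2]
  · rintro ⟨S, x⟩ hz
    simp only [erase_insert (mem_sdiff.1 (mem_sigma.1 hz).2).2]
  · rintro ⟨S, x⟩ hz
    simp only [insert_erase (mem_sigma.1 hz).2]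

theorem eq_fillWeight_of_forall_succ {U : Finset α} {G : ℕ → Finset α → R}
    (hzero : ∀ S ⊆ U, G 0 S = 1)
    (hsucc : ∀ c, ∀ S ⊆ U, G (c + 1) S = ∑ x ∈ U \ S, w S x * G c (insert x S)) :
    G #U ∅ = fillWeight w U := by
  have hinv : ∀ c j, c + j = #U →
      ∑ S ∈ powersetCard j U, fillWeight w S * G c S = fillWeight w U := by
    intro c
    induction c with
    | zero =>
      intro j hj
      obtain rfl : j = #U := by rw [← hj, zero_add]
      rw [powersetCard_self, sum_singleton, hzero U Subset.rfl, mul_one]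
    | succ c ih =>
      intro j hj
      rw [← sum_powersetCard_succ_fillWeight_mul (hsucc c), ih (j + 1) (by omega)]
  simpa [fillWeight_empty] using hinv #U 0 (add_zero _)

theorem sum_fillWeight_erase_union_mul {A B : Finset α} (hAB : Disjoint A B) (hA : A.Nonempty)
    {c : R} (hw : ∀ x ∈ A, w (A.erase x ∪ B) x = w (A.erase x) x)
    (hc : ∀ x ∈ A,
      fillWeight w (A.erase x ∪ B) = c * (fillWeight w (A.erase x) * fillWeight w B)) :
    ∑ x ∈ A, fillWeight w ((A ∪ B).erase x) * w ((A ∪ B).erase x) x =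
      c * (fillWeight w A * fillWeight w B) := by
  rw [fillWeight_of_nonempty hA, sum_mul, mul_sum]
  refine sum_congr rfl fun x hx => ?_
  rw [erase_union_distrib, erase_eq_of_notMem (disjoint_left.1 hAB hx), hc x hx, hw x hx]
  ring

theorem fillWeight_union {A B : Finset α} (hAB : Disjoint A B)
    (hA : ∀ A' ⊆ A, ∀ B' ⊆ B, ∀ x ∈ A \ A', w (A' ∪ B') x = w A' x)
    (hB : ∀ A' ⊆ A, ∀ B' ⊆ B, ∀ x ∈ B \ B', w (A' ∪ B') x = w B' x) :
    fillWeight w (A ∪ B) = (#A + #B).choose #A * (fillWeight w A * fillWeight w B) := by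
  induction hm : #A + #B generalizing A B with
  | zero =>
    obtain ⟨hA0, hB0⟩ := Nat.add_eq_zero_iff.1 hm
    rw [card_eq_zero.1 hA0, card_eq_zero.1 hB0]
    simp [fillWeight_empty]
  | succ m ih =>
    rcases A.eq_empty_or_nonempty with rfl | hAne
    · simp [fillWeight_empty]
    rcases B.eq_empty_or_nonempty with rfl | hBne
    · rw [card_empty, add_zero] at hm
      simp [fillWeight_empty, hm]
    have hlastA := sum_fillWeight_erase_union_mul (c := (m.choose (#A - 1) : R)) hAB hAne
      (fun x hx => hA _ (erase_subset x A) B Subset.rfl x (by simp [hx])) fun x hx => by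
        have hxA := erase_subset x A
        rw [ih (disjoint_of_subset_left hxA hAB)
          (fun A' hA' B' hB' y hy =>
            hA A' (hA'.trans hxA) B' hB' y (sdiff_subset_sdiff hxA Subset.rfl hy))
          (fun A' hA' => hB A' (hA'.trans hxA)) (by grind), card_erase_of_mem hx]
    have hlastB := sum_fillWeight_erase_union_mul (w := w) (c := (m.choose #A : R)) hAB.symm
      hBne (fun x hx => by rw [union_comm, hB A Subset.rfl _ (erase_subset x B) x (by simp [hx])])
      fun x hx => by
        have hxB := erase_subset x B
        rw [union_comm, ih (disjoint_of_subset_right hxB hAB)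
          (fun A' hA' B' hB' => hA A' hA' B' (hB'.trans hxB))
          (fun A' hA' B' hB' y hy =>
            hB A' hA' B' (hB'.trans hxB) y (sdiff_subset_sdiff hxB Subset.rfl hy)) (by grind),
          mul_comm (fillWeight w A)]
    rw [union_comm B A, mul_comm (fillWeight w B)] at hlastB
    rw [fillWeight_of_nonempty (hAne.mono subset_union_left), sum_union hAB, hlastA, hlastB,
      Nat.choose_eq_choose_pred_add m.succ_pos hAne.card_pos, Nat.succ_sub_one, Nat.cast_add,
      add_mul]

end FillWeight

section ForwardProcess

variable {n : ℕ}

/-- The probability of the coin value `b`, where `true` has probability `p`. -/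
def coinWeight (p : ℝ) (b : Bool) : ℝ :=
  if b then p else 1 - p

/-- The expected number of preference lists in `{1, …, n}` under which `c` further cars all park,
starting from the occupied set `occ`, when each car flips a coin with probability `p` of `true`. -/
noncomputable def expectedParking (step : Finset ℕ → ℕ → Bool → Option ℕ) (n : ℕ) (p : ℝ)
    (c : ℕ) (occ : Finset ℕ) : ℝ :=
  ∑ f : Fin c → Fin n × Bool, (∏ i, coinWeight p (f i).2) *
    if runPark step (List.ofFn fun i => (((f i).1 : ℕ) + 1, (f i).2)) occ then 1 else 0

variable (step : Finset ℕ → ℕ → Bool → Option ℕ) (p : ℝ)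

theorem expectedParking_zero (occ : Finset ℕ) : expectedParking step n p 0 occ = 1 := by
  simp [expectedParking, runPark]

theorem expectedParking_succ (c : ℕ) (occ : Finset ℕ) :
    expectedParking step n p (c + 1) occ = ∑ ab : Fin n × Bool, coinWeight p ab.2 *
      (step occ (ab.1 + 1) ab.2).elim 0 fun s => expectedParking step n p c (insert s occ) := by
  rw [expectedParking, ← (Fin.consEquiv fun _ => Fin n × Bool).sum_comp, Fintype.sum_prod_type]
  refine sum_congr rfl fun ab _ => ?_
  cases hs : step occ (ab.1 + 1) ab.2 <;>
    simp [Fin.prod_univ_succ, List.ofFn_succ, runPark, hs, expectedParking, mul_sum]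

theorem T_eq_expectedParking (k n : ℕ) : T k p n = expectedParking (naplesStep n k) n p n ∅ := by
  rw [expectedParking, ← (Equiv.arrowProdEquivProdArrow (Fin n) _ _).symm.sum_comp,
    Fintype.sum_prod_type]
  rfl

end ForwardProcess

section NaplesStep

theorem firstFree_range'_eq_some_iff {occ : Finset ℕ} {lo len x : ℕ} :
    firstFree occ (List.range' lo len) = some x ↔
      x ∈ Ico lo (lo + len) ∧ x ∉ occ ∧ Ico lo x ⊆ occ := by
  simp only [firstFree, decide_not, List.find?_range'_eq_some, Bool.not_eq_eq_eq_not,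
    Bool.not_true, decide_eq_false_iff_not, List.mem_range'_1, Bool.not_not, decide_eq_true_eq,
    mem_Ico, subset_iff, and_imp]
  grind

theorem firstFree_reverse_range'_eq_some_iff {occ : Finset ℕ} {lo len x : ℕ} :
    firstFree occ (List.range' lo len).reverse = some x ↔
      x ∈ Ico lo (lo + len) ∧ x ∉ occ ∧ Ioo x (lo + len) ⊆ occ := by
  induction len with
  | zero => simp [firstFree]
  | succ m ih =>
    rw [firstFree] at ih ⊢
    rw [List.range'_1_concat, List.reverse_concat, List.find?_cons]
    simp only [subset_iff, mem_Ioo, mem_Ico] at ih ⊢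
    grind

theorem firstFree_reverse_range'_eq_none_iff {occ : Finset ℕ} {lo len : ℕ} :
    firstFree occ (List.range' lo len).reverse = none ↔ Ico lo (lo + len) ⊆ occ := by
  simp [firstFree, subset_iff]

/-- Given the occupied set `occ`, a car with preference `a` and coin `back` ends up on the free spot
`x`, provided the street reaches that far. -/
def ParksAt (k : ℕ) (occ : Finset ℕ) (a : ℕ) (back : Bool) (x : ℕ) : Prop :=
  x = a ∨ (back ∧ x < a ∧ a ≤ x + k ∧ Ioc x a ⊆ occ) ∨
    (a < x ∧ Ico a x ⊆ occ ∧ (back → Ico (max (a - k) 1) a ⊆ occ))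

instance {k : ℕ} {occ : Finset ℕ} {a : ℕ} {back : Bool} {x : ℕ} :
    Decidable (ParksAt k occ a back x) := by
  unfold ParksAt; infer_instance

theorem naplesStep_eq_some_iff {n k : ℕ} {occ : Finset ℕ} {a : ℕ} {back : Bool} {x : ℕ}
    (ha : a ∈ Ioo 0 (n + 1)) :
    naplesStep n k occ a back = some x ↔ x ∈ Ioo 0 (n + 1) \ occ ∧ ParksAt k occ a back x := by
  have hend : max (a - k) 1 + min k (a - 1) = a := by grind
  have hB (y) := @firstFree_reverse_range'_eq_some_iff occ (max (a - k) 1) (min k (a - 1)) y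
  have hN := @firstFree_reverse_range'_eq_none_iff occ (max (a - k) 1) (min k (a - 1))
  have hF := @firstFree_range'_eq_some_iff occ (a + 1) (n - a) x
  rw [naplesStep, ParksAt]
  simp only [hend, subset_iff, mem_Ioo, mem_Ico, mem_Ioc, mem_sdiff] at ha hB hN hF ⊢
  by_cases hocc : a ∈ occ
  · cases back
    · grind
    · cases hfound : firstFree occ (List.range' (max (a - k) 1) (min k (a - 1))).reverse with
      | none => grind
      | some s =>
        have hs := (hB s).1 hfound
        clear hB hN hF hfound
        grind
  · clear hB hN hF
    grind

theorem ParksAt.mem_insert {k : ℕ} {occ : Finset ℕ} {a : ℕ} {back : Bool} {x : ℕ}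
    (h : ParksAt k occ a back x) : a ∈ insert x occ := by
  rcases h with rfl | ⟨-, hxa, -, hocc⟩ | ⟨hax, hocc, -⟩
  · exact mem_insert_self _ _
  · exact mem_insert_of_mem (hocc (right_mem_Ioc.2 hxa))
  · exact mem_insert_of_mem (hocc (left_mem_Ico.2 hax))

theorem ParksAt.of_window {k : ℕ} {occ occ' : Finset ℕ} {a : ℕ} {back : Bool} {l r x : ℕ}
    (h : ParksAt k occ a back x) (hx : x ∈ Ioo l r) (hl : l ∉ occ) (hr : r ∉ occ)
    (hocc : occ ∩ Ioo l r ⊆ occ') : ParksAt k occ' a back x := by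
  simp only [ParksAt, subset_iff, mem_inter, mem_Ioo, mem_Ico, mem_Ioc] at *
  rcases h with rfl | ⟨hb, hxa, hak, hback⟩ | ⟨hax, hfwd, hback⟩
  · exact .inl rfl
  · have har : a < r := by grind
    exact .inr (.inl ⟨hb, hxa, hak, fun y hy => hocc ⟨hback hy, by omega⟩⟩)
  · have hla : l < a := by grind
    refine .inr (.inr ⟨hax, fun y hy => hocc ⟨hfwd hy, by omega⟩, fun hb y hy => ?_⟩)
    have hly : l < y := by grind
    exact hocc ⟨hback hb hy, by omega⟩

end NaplesStep

section PrefWeight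

variable {k : ℕ} {p : ℝ} {occ occ' : Finset ℕ} {a l r x : ℕ}

/-- The probability that a car with preference `a` ends up on the free spot `x`. -/
noncomputable def parkProb (k : ℕ) (p : ℝ) (occ : Finset ℕ) (a x : ℕ) : ℝ :=
  ∑ back : Bool, if ParksAt k occ a back x then coinWeight p back else 0

/-- The expected number of preferences for which a car ends up on the free spot `x`. Only
preferences in `insert x occ` can contribute, so the length of the street plays no role. -/
noncomputable def prefWeight (k : ℕ) (p : ℝ) (occ : Finset ℕ) (x : ℕ) : ℝ :=
  ∑ a ∈ insert x occ, parkProb k p occ a x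

theorem parkProb_eq_zero (ha : a ∉ insert x occ) : parkProb k p occ a x = 0 :=
  sum_eq_zero fun _ _ => if_neg fun h => ha h.mem_insert

theorem prefWeight_eq_sum {U : Finset ℕ} (hU : insert x occ ⊆ U) :
    prefWeight k p occ x = ∑ a ∈ U, parkProb k p occ a x :=
  sum_subset hU fun _ _ ha => parkProb_eq_zero ha

theorem prefWeight_congr_window (hx : x ∈ Ioo l r) (hl : l ∉ occ) (hr : r ∉ occ) (hl' : l ∉ occ')
    (hr' : r ∉ occ') (hocc : occ ∩ Ioo l r = occ' ∩ Ioo l r) :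
    prefWeight k p occ x = prefWeight k p occ' x := by
  have hiff (a back) : ParksAt k occ a back x ↔ ParksAt k occ' a back x :=
    ⟨fun h => h.of_window hx hl hr (hocc ▸ inter_subset_left),
      fun h => h.of_window hx hl' hr' (hocc ▸ inter_subset_left)⟩
  rw [prefWeight_eq_sum (U := insert x (occ ∪ occ')) (insert_subset_insert x subset_union_left),
    prefWeight_eq_sum (U := insert x (occ ∪ occ')) (insert_subset_insert x subset_union_right)]
  exact sum_congr rfl fun a _ => sum_congr rfl fun back _ => if_congr (hiff a back) rfl rfl

theorem naplesStep_elim_eq_sum {n : ℕ} {back : Bool} (ha : a ∈ Ioo 0 (n + 1)) (g : ℕ → ℝ) :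
    (naplesStep n k occ a back).elim 0 g =
      ∑ x ∈ Ioo 0 (n + 1) \ occ, if ParksAt k occ a back x then g x else 0 := by
  have hiff (x) := naplesStep_eq_some_iff (k := k) (occ := occ) (back := back) (x := x) ha
  cases hs : naplesStep n k occ a back with
  | none =>
    refine (sum_eq_zero fun x hx => if_neg fun hpark => ?_).symm
    simpa [hs] using (hiff x).2 ⟨hx, hpark⟩
  | some s =>
    obtain ⟨hsU, hpark⟩ := (hiff s).1 hs
    rw [Option.elim_some, sum_eq_single_of_mem s hsU, if_pos hpark]
    refine fun x hx hxs => if_neg fun hpark' => hxs ?_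
    simpa [hs, eq_comm] using (hiff x).2 ⟨hx, hpark'⟩

theorem sum_Ioo_zero_add_one {M : Type*} [AddCommMonoid M] (n : ℕ) (f : ℕ → M) :
    ∑ a ∈ Ioo 0 (n + 1), f a = ∑ i : Fin n, f (i + 1) := by
  rw [Fin.sum_univ_eq_sum_range (fun i => f (i + 1)), range_eq_Ico, sum_Ico_add']
  rfl

theorem expectedParking_naplesStep_succ {n : ℕ} (c : ℕ) (hocc : occ ⊆ Ioo 0 (n + 1)) :
    expectedParking (naplesStep n k) n p (c + 1) occ =
      ∑ x ∈ Ioo 0 (n + 1) \ occ,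
        prefWeight k p occ x * expectedParking (naplesStep n k) n p c (insert x occ) := by
  have hpref : ∀ x ∈ Ioo 0 (n + 1) \ occ,
      prefWeight k p occ x = ∑ i : Fin n, parkProb k p occ (i + 1) x := fun x hx => by
    rw [prefWeight_eq_sum (insert_subset (mem_sdiff.1 hx).1 hocc), sum_Ioo_zero_add_one]
  rw [sum_congr rfl fun x hx => congrArg (· * _) (hpref x hx)]
  simp only [parkProb, ← Fintype.sum_prod_type', sum_mul]
  rw [expectedParking_succ, sum_comm]
  refine sum_congr rfl fun ab _ => ?_
  rw [naplesStep_elim_eq_sum (by simp), mul_sum]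
  exact sum_congr rfl fun x _ => by split_ifs <;> simp

theorem T_eq_fillWeight (k : ℕ) (p : ℝ) (n : ℕ) :
    T k p n = fillWeight (prefWeight k p) (Ioo 0 (n + 1)) := by
  rw [T_eq_expectedParking, ← eq_fillWeight_of_forall_succ
    (G := expectedParking (naplesStep n k) n p) (fun S _ => expectedParking_zero _ _ S)
    fun c S hS => expectedParking_naplesStep_succ c hS, Nat.card_Ioo]
  rfl

theorem parkProb_self : parkProb k p occ x x = 1 := by
  simp [parkProb, ParksAt, coinWeight]

theorem parkProb_of_Ioc_subset (hxa : x < a) (hocc : Ioc x a ⊆ occ) :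
    parkProb k p occ a x = if a ≤ x + k then p else 0 := by
  simp [parkProb, ParksAt, coinWeight, hxa, hxa.ne, hxa.le.not_gt, hocc]

theorem parkProb_of_Ico_subset (hax : a < x) (hl : l < a) (hlocc : l ∉ occ)
    (hocc : Ioo l x ⊆ occ) :
    parkProb k p occ a x = 1 - if l ≠ 0 ∧ a ≤ l + k then p else 0 := by
  have hfwd : Ico a x ⊆ occ := fun y hy => hocc (by grind)
  have hback : Ico (max (a - k) 1) a ⊆ occ ↔ ¬(l ≠ 0 ∧ a ≤ l + k) := by
    refine ⟨fun hsub hlk => hlocc (hsub ?_), fun h y hy => hocc ?_⟩ <;>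
      simp only [mem_Ico, mem_Ioo] at * <;> omega
  by_cases h : l ≠ 0 ∧ a ≤ l + k <;>
    simp [parkProb, ParksAt, coinWeight, hax, hax.ne', hax.le.not_gt, hfwd, hback, h]

theorem sum_Ioo_ite_le_add (l i k : ℕ) (p : ℝ) :
    ∑ a ∈ Ioo l (l + i + 1), (if a ≤ l + k then p else 0) = p * (min k i : ℕ) := by
  have hfilter : {a ∈ Ioo l (l + i + 1) | a ≤ l + k} = Ioc l (l + min k i) := by grind
  rw [← sum_filter, hfilter, sum_const, Nat.card_Ioc, nsmul_eq_mul, mul_comm,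
    Nat.add_sub_cancel_left]

theorem prefWeight_Ioo_union_Ioo (k : ℕ) (p : ℝ) (l i j : ℕ) :
    prefWeight k p (Ioo l (l + i + 1) ∪ Ioo (l + i + 1) (l + i + 1 + j + 1)) (l + i + 1) =
      i + 1 + p * (min k j : ℕ) - if l = 0 then 0 else p * (min k i : ℕ) := by
  set A := Ioo l (l + i + 1)
  set B := Ioo (l + i + 1) (l + i + 1 + j + 1)
  have hleft : ∑ a ∈ A, parkProb k p (A ∪ B) a (l + i + 1) =
      i - if l = 0 then 0 else p * (min k i : ℕ) := by
    rw [sum_congr rfl fun a ha => parkProb_of_Ico_subset (mem_Ioo.1 ha).2 (mem_Ioo.1 ha).1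
      (by grind) subset_union_left]
    by_cases hl : l = 0
    · simp [hl]
    · simp only [ne_eq, hl, not_false_eq_true, true_and, if_false, sum_sub_distrib]
      rw [sum_Ioo_ite_le_add, sum_const, Nat.card_Ioo, nsmul_one]
      congr 2
      omega
  have hright : ∑ a ∈ B, parkProb k p (A ∪ B) a (l + i + 1) = p * (min k j : ℕ) := by
    rw [sum_congr rfl fun a ha => parkProb_of_Ioc_subset (mem_Ioo.1 ha).1 (by grind),
      sum_Ioo_ite_le_add]
  rw [prefWeight, sum_insert (by grind), sum_union (by grind [disjoint_left]), parkProb_self,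
    hleft, hright]
  ring

end PrefWeight

section BlockRecursion

variable (k : ℕ) (p : ℝ)

theorem fillWeight_prefWeight_union {l x r : ℕ} :
    fillWeight (prefWeight k p) (Ioo l x ∪ Ioo x r) =
      (#(Ioo l x) + #(Ioo x r)).choose #(Ioo l x) *
        (fillWeight (prefWeight k p) (Ioo l x) * fillWeight (prefWeight k p) (Ioo x r)) := by
  refine fillWeight_union (by grind [disjoint_left]) (fun A hA B hB y hy => ?_)
    fun A hA B hB y hy => ?_
  · exact prefWeight_congr_window (mem_sdiff.1 hy).1 (by grind) (by grind) (by grind) (by grind)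
      (by grind)
  · exact prefWeight_congr_window (mem_sdiff.1 hy).1 (by grind) (by grind) (by grind) (by grind)
      (by grind)

theorem fillWeight_prefWeight_Ioo_succ (l m : ℕ) :
    fillWeight (prefWeight k p) (Ioo l (l + (m + 1) + 1)) =
      ∑ ij ∈ antidiagonal m, (m.choose ij.1 : ℝ) *
        (fillWeight (prefWeight k p) (Ioo l (l + ij.1 + 1)) *
          fillWeight (prefWeight k p) (Ioo (l + ij.1 + 1) (l + ij.1 + 1 + ij.2 + 1))) *
        (ij.1 + 1 + p * (min k ij.2 : ℕ) - if l = 0 then 0 else p * (min k ij.1 : ℕ)) := by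
  have hcard (l i : ℕ) : #(Ioo l (l + i + 1)) = i := by rw [Nat.card_Ioo]; omega
  have herase {i j : ℕ} (hij : i + j = m) : (Ioo l (l + (m + 1) + 1)).erase (l + i + 1) =
      Ioo l (l + i + 1) ∪ Ioo (l + i + 1) (l + i + 1 + j + 1) := by grind
  rw [fillWeight_of_nonempty ⟨l + 1, mem_Ioo.2 (by omega)⟩]
  refine (sum_nbij' (fun ij => l + ij.1 + 1) (fun x => (x - l - 1, l + m + 1 - x))
    ?_ ?_ ?_ ?_ fun ij hij => ?_).symm
  · intro ij hij
    rw [HasAntidiagonal.mem_antidiagonal] at hij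
    exact mem_Ioo.2 (by omega)
  · intro x hx
    rw [mem_Ioo] at hx
    exact HasAntidiagonal.mem_antidiagonal.2 (by omega)
  · intro ij hij
    rw [HasAntidiagonal.mem_antidiagonal] at hij
    exact Prod.ext (by omega) (by omega)
  · intro x hx
    rw [mem_Ioo] at hx
    omega
  · rw [HasAntidiagonal.mem_antidiagonal] at hij
    rw [herase hij, fillWeight_prefWeight_union, prefWeight_Ioo_union_Ioo, hcard, hcard, hij]

theorem fillWeight_prefWeight_Ioo_of_pos {l : ℕ} (hl : 0 < l) (m : ℕ) :
    fillWeight (prefWeight k p) (Ioo l (l + m + 1)) = abelPoly 1 m := by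
  induction m using Nat.strong_induction_on generalizing l with
  | _ m ih =>
  cases m with
  | zero => rw [add_zero, Ioo_add_one_right_eq_Ioc, Ioc_self, fillWeight_empty, abelPoly]
  | succ m =>
    have hterm : ∀ ij ∈ antidiagonal m, (m.choose ij.1 : ℝ) *
        (fillWeight (prefWeight k p) (Ioo l (l + ij.1 + 1)) *
          fillWeight (prefWeight k p) (Ioo (l + ij.1 + 1) (l + ij.1 + 1 + ij.2 + 1))) *
        (ij.1 + 1 + p * (min k ij.2 : ℕ) - if l = 0 then 0 else p * (min k ij.1 : ℕ)) =
        m.choose ij.1 * (abelPoly 1 ij.1 * abelPoly 1 ij.2) * (ij.1 + 1) +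
          m.choose ij.1 * (abelPoly 1 ij.1 * abelPoly 1 ij.2) *
            (p * (min k ij.2 : ℕ) - p * (min k ij.1 : ℕ)) := by
      intro ij hij
      rw [HasAntidiagonal.mem_antidiagonal] at hij
      rw [ih _ (by omega) hl, ih _ (by omega) (Nat.succ_pos _), if_neg hl.ne']
      ring
    rw [fillWeight_prefWeight_Ioo_succ, sum_congr rfl hterm, sum_add_distrib,
      sum_antidiagonal_choose_mul_abelPoly_one_mul_abelPoly_one,
      sum_antidiagonal_choose_mul_mul_sub_eq_zero (fun i => p * (min k i : ℕ)), add_zero]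

theorem T_zero : T k p 0 = 1 := by
  rw [T_eq_fillWeight]
  exact fillWeight_empty

theorem T_succ (m : ℕ) :
    T k p (m + 1) = ∑ ij ∈ antidiagonal m, (m.choose ij.1 : ℝ) * T k p ij.1 * abelPoly 1 ij.2 *
      (ij.1 + 1 + p * (min k ij.2 : ℕ)) := by
  have hblock := fillWeight_prefWeight_Ioo_succ k p 0 m
  simp only [Nat.zero_add, ← T_eq_fillWeight, if_true, sub_zero] at hblock
  rw [hblock]
  refine sum_congr rfl fun ij _ => ?_
  rw [fillWeight_prefWeight_Ioo_of_pos k p (Nat.succ_pos _), mul_assoc (Nat.cast _) (T _ _ _)]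

end BlockRecursion

end RandomNaples

theorem stmt2_general (k : ℕ) (p : ℝ) (n : ℕ) (hn : 1 ≤ n) :
    T k p 0 = 1 ∧
    T k p n = ∑ i ∈ Finset.range n,
      (Nat.choose (n - 1) i : ℝ) * T k p i * ((n - i : ℕ) : ℝ) ^ (n - i - 2) *
        ((i : ℝ) + 1 + p * (min k (n - i - 1) : ℕ)) := by
  obtain ⟨m, rfl⟩ := Nat.exists_eq_add_of_le' hn
  refine ⟨T_zero k p, ?_⟩
  rw [T_succ, Finset.Nat.sum_antidiagonal_eq_sum_range_succ_mk]
  refine Finset.sum_congr rfl fun i hi => ?_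
  have him : m + 1 - i = m - i + 1 := Nat.succ_sub (Finset.mem_range_succ_iff.1 hi)
  rw [him, Nat.add_sub_cancel, Nat.add_sub_cancel, abelPoly_one, Nat.add_sub_add_right]

/-- The recursion for the expected number of random `k`-Naples parking functions. -/
theorem stmt2 (k : ℕ) (p : ℝ) (hp0 : 0 ≤ p) (hp1 : p ≤ 1) (n : ℕ) (hn : 1 ≤ n) :
    T k p 0 = 1 ∧
    T k p n = ∑ i ∈ Finset.range n,
      (Nat.choose (n - 1) i : ℝ) * T k p i * ((n - i : ℕ) : ℝ) ^ (n - i - 2) *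
        ((i : ℝ) + 1 + p * (min k (n - i - 1) : ℕ)) :=
  stmt2_general k p n hn
end

section
/- Let α' ∈ {1,...,n−1}^{n−1} and define α = (1, α'_1 + 1, α'_2 + 1, ..., α'_{n−1} + 1) ∈ {1,...,n}^n. Then the probability that α parks in the random 1-Naples model on n spots equals the probability that α' parks in the random 1-Naples model on n−1 spots; equivalently, g(α) = 2·g(α'). -/
/-!
The new first car takes spot `1`, which is never free again, so for the later cars backing up into
spot `1` fails exactly as backing up off the street does. On spots `2, …, n` they therefore park as
the cars of `α'` do on spots `1, …, n - 1`, whatever the coin of the new car. Averaging over that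
coin leaves the probability unchanged. In `g` the first car has no coin, so the free coin is that of
the second car of `α`: this is the first car of `α'`, whose coin `g` does not count. Hence the
factor `2`.
-/

theorem firstFree_filter_ne {occ : Finset ℕ} {s : ℕ} (hs : s ∈ occ) (l : List ℕ) :
    firstFree occ (l.filter (· ≠ s)) = firstFree occ l := by
  simp only [firstFree, List.find?_filter]
  refine List.find?_congr fun x _ ↦ ?_
  grind

/-- The spots checked, in order, by a car preferring spot `a` in the `k`-Naples model on spots
`1, …, n`. The preferred spot comes first, so that no case distinction on whether it is free is
needed. -/
def naplesSearch (n k a : ℕ) (back : Bool) : List ℕ :=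
  a :: ((if back then (List.range' (max (a - k) 1) (min k (a - 1))).reverse else []) ++
    List.range' (a + 1) (n - a))

theorem naplesStep_eq_firstFree (n k : ℕ) (occ : Finset ℕ) (a : ℕ) (back : Bool) :
    naplesStep n k occ a back = firstFree occ (naplesSearch n k a back) := by
  by_cases ha : a ∈ occ
  · cases back
    · simp [naplesStep, naplesSearch, firstFree, ha]
    · rw [naplesStep, if_neg (not_not_intro ha), if_pos rfl, naplesSearch, if_pos rfl]
      simp only [firstFree]
      rw [List.find?_cons_of_neg (by simpa using ha), List.find?_append]
      cases List.find? (fun s ↦ decide (s ∉ occ))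
        (List.range' (max (a - k) 1) (min k (a - 1))).reverse <;> rfl
  · simp [naplesStep, naplesSearch, firstFree, ha]

theorem one_le_of_mem_naplesSearch {n k a s : ℕ} {back : Bool} (ha : 1 ≤ a)
    (hs : s ∈ naplesSearch n k a back) : 1 ≤ s := by
  grind [naplesSearch]

theorem range'_back_succ_filter_ne_one (k a : ℕ) :
    (List.range' (max (a + 1 - k) 1) (min k a)).filter (· ≠ 1) =
      (List.range' (max (a - k) 1) (min k (a - 1))).map (· + 1) := by
  rw [← List.range'_succ_left]
  rcases lt_or_ge k a with hk | hk
  · have hmax : max (a + 1 - k) 1 = max (a - k) 1 + 1 := by omega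
    have hmin : min k a = min k (a - 1) := by omega
    rw [hmax, hmin, List.filter_eq_self]
    grind
  · have hmax : max (a + 1 - k) 1 = 1 := by omega
    have hmax' : max (a - k) 1 = 1 := by omega
    have hmin : min k (a - 1) = a - 1 := by omega
    rw [hmax, hmax', min_eq_right hk, hmin]
    cases a with
    | zero => rfl
    | succ a =>
      rw [List.range'_succ, List.filter_cons_of_neg (by simp), List.filter_eq_self.mpr (by grind),
        Nat.add_sub_cancel]

theorem naplesSearch_succ_filter_ne_one {n k a : ℕ} (back : Bool) (ha : 1 ≤ a) :
    (naplesSearch (n + 1) k (a + 1) back).filter (· ≠ 1) =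
      (naplesSearch n k a back).map (· + 1) := by
  have hfwd : (List.range' (a + 1 + 1) (n + 1 - (a + 1))).filter (· ≠ 1) =
      (List.range' (a + 1) (n - a)).map (· + 1) := by
    rw [← List.range'_succ_left, Nat.add_sub_add_right, List.filter_eq_self]
    grind
  rw [naplesSearch, naplesSearch, List.filter_cons_of_pos (by simp; omega), List.filter_append,
    hfwd, List.map_cons, List.map_append]
  cases back
  · rfl
  · simp only [if_true, List.filter_reverse, List.map_reverse, Nat.add_sub_cancel,
      range'_back_succ_filter_ne_one]

/-- The occupied spots after a car has been parked in spot `1` in front of a street with occupied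
spots `occ`, the spots of that street being renumbered by `s ↦ s + 1`. -/
def shiftOcc (occ : Finset ℕ) : Finset ℕ :=
  insert 1 (occ.map (addRightEmbedding 1))

theorem one_mem_shiftOcc (occ : Finset ℕ) : 1 ∈ shiftOcc occ :=
  Finset.mem_insert_self _ _

theorem succ_mem_shiftOcc {occ : Finset ℕ} {s : ℕ} (hs : 1 ≤ s) :
    s + 1 ∈ shiftOcc occ ↔ s ∈ occ := by
  simp [shiftOcc, Nat.one_le_iff_ne_zero.mp hs]

theorem shiftOcc_insert (s : ℕ) (occ : Finset ℕ) :
    shiftOcc (insert s occ) = insert (s + 1) (shiftOcc occ) := by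
  simp [shiftOcc, Finset.map_insert, Finset.insert_comm]

theorem firstFree_shiftOcc (occ : Finset ℕ) {l : List ℕ} (hl : ∀ s ∈ l, 1 ≤ s) :
    firstFree (shiftOcc occ) (l.map (· + 1)) = (firstFree occ l).map (· + 1) := by
  rw [firstFree, firstFree, List.find?_map]
  congr 1
  exact List.find?_congr fun s hs ↦ by simp [succ_mem_shiftOcc (hl s hs)]

theorem naplesStep_shiftOcc (n k : ℕ) (occ : Finset ℕ) {a : ℕ} (back : Bool) (ha : 1 ≤ a) :
    naplesStep (n + 1) k (shiftOcc occ) (a + 1) back =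
      (naplesStep n k occ a back).map (· + 1) := by
  rw [naplesStep_eq_firstFree, naplesStep_eq_firstFree,
    ← firstFree_filter_ne (one_mem_shiftOcc occ), naplesSearch_succ_filter_ne_one back ha,
    firstFree_shiftOcc occ fun _ ↦ one_le_of_mem_naplesSearch ha]

theorem runPark_map {step step' : Finset ℕ → ℕ → Bool → Option ℕ} {f : ℕ → ℕ}
    {F : Finset ℕ → Finset ℕ} (hF : ∀ s occ, F (insert s occ) = insert (f s) (F occ))
    {l : List (ℕ × Bool)}
    (hstep : ∀ c ∈ l, ∀ occ, step' (F occ) (f c.1) c.2 = (step occ c.1 c.2).map f)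
    (occ : Finset ℕ) :
    runPark step' (l.map (Prod.map f id)) (F occ) = runPark step l occ := by
  induction l generalizing occ with
  | nil => rfl
  | cons c l ih =>
    rw [List.forall_mem_cons] at hstep
    simp only [List.map_cons, Prod.map, id, runPark, hstep.1]
    cases step occ c.1 c.2 with
    | none => rfl
    | some s => simpa only [Option.map_some, hF] using ih hstep.2 (insert s occ)

theorem parksNaples_succ (n k : ℕ) (α : Fin (n + 1) → ℕ) (b : Fin (n + 1) → Bool) :
    parksNaples (n + 1) k α b =
      runPark (naplesStep (n + 1) k) (List.ofFn fun i : Fin n ↦ (α i.succ, b i.succ)) {α 0} := by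
  simp [parksNaples, List.ofFn_succ, runPark, naplesStep]

theorem parksNaples_cons_coin (n k : ℕ) (α : Fin (n + 1) → ℕ) (b : Fin n → Bool) (c c' : Bool) :
    parksNaples (n + 1) k α (Fin.cons c b) = parksNaples (n + 1) k α (Fin.cons c' b) := by
  simp only [parksNaples_succ, Fin.cons_succ]

/-- The preference list `(1, α₁ + 1, …, αₙ + 1)`: a car preferring spot `1` is put before the
cars of `α`, whose preferences move up by one. -/
def prependCar {n : ℕ} (α : Fin n → ℕ) : Fin (n + 1) → ℕ :=
  Fin.cons 1 fun i ↦ α i + 1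

theorem prependCar_eq_ite {n : ℕ} (α : Fin (n + 1) → ℕ) :
    prependCar α = fun i ↦ if i.1 = 0 then 1 else α ⟨i.1 - 1, by have := i.2; omega⟩ + 1 := by
  funext i
  cases i using Fin.cases <;> rfl

theorem parksNaples_prependCar {n : ℕ} (k : ℕ) {α : Fin n → ℕ} (hα : ∀ i, 1 ≤ α i) (c : Bool)
    (b : Fin n → Bool) :
    parksNaples (n + 1) k (prependCar α) (Fin.cons c b) = parksNaples n k α b := by
  have hcars : (List.ofFn fun i ↦ (α i + 1, b i)) =
      (List.ofFn fun i ↦ (α i, b i)).map (Prod.map (· + 1) id) := by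
    rw [List.map_ofFn]
    rfl
  simp only [parksNaples_succ, prependCar, Fin.cons_zero, Fin.cons_succ, hcars]
  refine runPark_map shiftOcc_insert ?_ ∅
  rw [List.forall_mem_ofFn_iff]
  exact fun i occ ↦ naplesStep_shiftOcc n k occ (b i) (hα i)

theorem sum_fin_succ_fun {n : ℕ} {ι M : Type*} [Fintype ι] [AddCommMonoid M]
    (f : (Fin (n + 1) → ι) → M) :
    ∑ b, f b = ∑ c : ι, ∑ b : Fin n → ι, f (Fin.cons c b) := by
  rw [← (Fin.consEquiv fun _ : Fin (n + 1) ↦ ι).sum_comp, Fintype.sum_prod_type]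
  rfl

theorem probNaples_prependCar {n : ℕ} (k : ℕ) (p : ℝ) {α : Fin n → ℕ} (hα : ∀ i, 1 ≤ α i) :
    probNaples (n + 1) k p (prependCar α) = probNaples n k p α := by
  simp only [probNaples, sum_fin_succ_fun, parksNaples_prependCar k hα, Fin.prod_univ_succ,
    Fin.cons_zero, Fin.cons_succ, mul_assoc, ← Finset.mul_sum, ← Finset.sum_mul]
  have hcoin : ∑ c : Bool, (if c then p else 1 - p) = 1 := by simp
  rw [hcoin, one_mul]

theorem parksUnder_succ (n : ℕ) (α : Fin (n + 1) → ℕ) (β : Fin n → Bool) :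
    parksUnder (n + 1) α β = parksNaples (n + 1) 1 α (Fin.cons false fun i ↦ !β i) := by
  rw [parksUnder]
  congr 1
  funext i
  cases i using Fin.cases <;> simp

theorem parksUnder_prependCar {n : ℕ} {α : Fin (n + 1) → ℕ} (hα : ∀ i, 1 ≤ α i) (c : Bool)
    (β : Fin n → Bool) :
    parksUnder (n + 2) (prependCar α) (Fin.cons c β : Fin (n + 1) → Bool) =
      parksUnder (n + 1) α β := by
  have hcoins : (fun i ↦ !(Fin.cons c β : Fin (n + 1) → Bool) i) =
      (Fin.cons (!c) fun i ↦ !β i : Fin (n + 1) → Bool) := by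
    funext i
    cases i using Fin.cases <;> rfl
  rw [parksUnder_succ, parksUnder_succ, parksNaples_prependCar 1 hα, hcoins]
  exact parksNaples_cons_coin ..

theorem g_succ (n : ℕ) (α : Fin (n + 1) → ℕ) :
    g (n + 1) α = ∑ β : Fin n → Bool, if parksUnder (n + 1) α β then 1 else 0 :=
  Finset.card_filter _ _

theorem g_prependCar {n : ℕ} {α : Fin (n + 1) → ℕ} (hα : ∀ i, 1 ≤ α i) :
    g (n + 2) (prependCar α) = 2 * g (n + 1) α := by
  simp only [g_succ, sum_fin_succ_fun, parksUnder_prependCar hα, Fintype.sum_bool, two_mul]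

theorem stmt14_general {n : ℕ} (k : ℕ) (p : ℝ) {α : Fin (n + 1) → ℕ} (hα : ∀ i, 1 ≤ α i) :
    probNaples (n + 2) k p (prependCar α) = probNaples (n + 1) k p α ∧
      g (n + 2) (prependCar α) = 2 * g (n + 1) α :=
  ⟨probNaples_prependCar k p hα, g_prependCar hα⟩

/-- Prepending a car with preference `1` and shifting all preferences up by one does not
change the probability of parking; equivalently `g(α) = 2 g(α')`. -/
theorem stmt14 (n : ℕ) (hn : 2 ≤ n) (α' : Fin (n - 1) → Fin (n - 1)) :
    probNaples n 1 (1/2)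
        (fun i => if i.1 = 0 then 1 else ((α' ⟨i.1 - 1, by have := i.2; omega⟩).1 + 1) + 1)
      = probNaples (n - 1) 1 (1/2) (fun i => (α' i).1 + 1) ∧
    g n (fun i => if i.1 = 0 then 1 else ((α' ⟨i.1 - 1, by have := i.2; omega⟩).1 + 1) + 1)
      = 2 * g (n - 1) (fun i => (α' i).1 + 1) := by
  obtain ⟨m, rfl⟩ : ∃ m, n = m + 2 := Nat.exists_eq_add_of_le' hn
  exact prependCar_eq_ite (fun i ↦ (α' i).1 + 1) ▸ stmt14_general 1 (1 / 2) fun _ ↦ by omega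
end

section
/- Let P(n) = (n+1)^{n−1} be the number of parking functions on n cars, let N(n) be the number of 1-Naples parking functions on n cars, and let T(n) be the expected number of random 1-Naples parking functions with p = 1/2. Then for all n ≥ 1, P(n) ≤ T(n) ≤ (N(n) + P(n))/2. -/
/-!
Condition on the spot of the last car to park: it splits the street into two blocks that were filled
independently. Away from spot `1`, backing up gains one preference past the right end of a block and
loses one at its left end; by symmetry these effects cancel, so such a block is counted by parking
functions. Only a block that starts at spot `1` keeps the gain, which gives
`T (n + 1) = ∑ i + j = n, C(n, i) T i P j (i + 1 + p min 1 j)` for coins of bias `p`. Hence `T` is a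
polynomial in `p` with nonnegative coefficients, equal to `P` at `p = 0` and to `N` at `p = 1`; as
such it is increasing and lies below its chord on `[0, 1]`.
-/

open Finset

section ParkingNumber

theorem sum_neg_one_pow_mul_choose_mul_succ_pow {R : Type*} [CommRing R] {d m : ℕ} (h : d < m) :
    ∑ k ∈ range (m + 1), (-1 : R) ^ (m - k) * m.choose k * (k + 1) ^ d = 0 := by
  have h0 := congrFun (fwdDiff_iter_pow_eq_zero_of_lt (R := R) h) 1
  rw [fwdDiff_iter_eq_sum_shift] at h0
  simpa [add_comm (1 : R), zsmul_eq_mul] using h0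

theorem choose_mul_choose_sub_comm (n k j : ℕ) :
    n.choose k * (n - k).choose j = n.choose j * (n - j).choose k := by
  have hk := Nat.choose_mul (n := n) (Nat.le_add_right k j)
  have hj := Nat.choose_mul (n := n) (Nat.le_add_left j k)
  rw [Nat.add_sub_cancel_left] at hk
  rw [Nat.add_sub_cancel, ← Nat.choose_symm_add] at hj
  exact hk.symm.trans hj

/- Expanding `(x - k) ^ (n - k)` around `x + 1`, the coefficient of every power of `x + 1` below the
`n`-th is an iterated difference of a polynomial of too small a degree. -/
theorem abel_identity {R : Type*} [CommRing R] (n : ℕ) (x : R) :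
    ∑ k ∈ range (n + 1), n.choose k * (k + 1) ^ (k - 1) * (x - k) ^ (n - k) = (x + 1) ^ n := by
  have expand (k : ℕ) :
      n.choose k * ((k : R) + 1) ^ (k - 1) * (x - k) ^ (n - k) =
        ∑ j ∈ range (n - k + 1), n.choose j * (x + 1) ^ j *
          ((-1) ^ (n - j - k) * (n - j).choose k *
            ((k + 1) ^ (k - 1) * (k + 1) ^ (n - j - k))) := by
    rw [show x - k = (x + 1) + -1 * (k + 1) by ring, add_pow (x + 1), mul_sum]
    refine sum_congr rfl fun j _ ↦ ?_
    have hchoose := congrArg (Nat.cast (R := R)) (choose_mul_choose_sub_comm n k j)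
    push_cast at hchoose
    rw [mul_pow, Nat.sub_right_comm n k j]
    linear_combination ((k : R) + 1) ^ (k - 1) * (x + 1) ^ j * (-1) ^ (n - j - k) *
      (k + 1) ^ (n - j - k) * hchoose
  have vanish (j : ℕ) (hj : j < n) :
      ∑ k ∈ range (n - j + 1), (-1 : R) ^ (n - j - k) * (n - j).choose k *
        ((k + 1) ^ (k - 1) * (k + 1) ^ (n - j - k)) = 0 := by
    rw [← sum_neg_one_pow_mul_choose_mul_succ_pow (R := R)
      (Nat.sub_one_lt (Nat.sub_ne_zero_of_lt hj))]
    refine sum_congr rfl fun k hk ↦ ?_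
    have hkj := mem_range.1 hk
    rcases k with _ | k
    · simp
    · rw [← pow_add]
      congr 2
      omega
  calc
    _ = ∑ k ∈ range (n + 1), ∑ j ∈ range (n - k + 1), n.choose j * (x + 1) ^ j *
          ((-1) ^ (n - j - k) * (n - j).choose k *
            (((k : R) + 1) ^ (k - 1) * (k + 1) ^ (n - j - k))) :=
      sum_congr rfl fun k _ ↦ expand k
    _ = ∑ j ∈ range (n + 1), n.choose j * (x + 1) ^ j * ∑ k ∈ range (n - j + 1),
          (-1) ^ (n - j - k) * (n - j).choose k *
            (((k : R) + 1) ^ (k - 1) * (k + 1) ^ (n - j - k)) := by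
      simp_rw [mul_sum]
      refine sum_comm' fun k j ↦ ?_
      simp only [mem_range]
      omega
    _ = (x + 1) ^ n := by
      rw [sum_range_succ, sum_eq_zero fun j hj ↦ by rw [vanish j (mem_range.1 hj), mul_zero]]
      simp

/-- The number `P(n) = (n + 1) ^ (n - 1)` of parking functions on `n` cars, as a real number. -/
def parkingNumber (n : ℕ) : ℝ := ((n : ℝ) + 1) ^ (n - 1)

@[simp]
theorem parkingNumber_zero : parkingNumber 0 = 1 := pow_zero _

theorem parkingNumber_pos (n : ℕ) : 0 < parkingNumber n := by
  unfold parkingNumber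
  positivity

theorem parkingNumber_mul_succ (n : ℕ) : parkingNumber n * (n + 1) = ((n : ℝ) + 1) ^ n := by
  cases n with
  | zero => simp
  | succ n => rw [parkingNumber, Nat.succ_sub_one, pow_succ]

theorem parkingNumber_succ (n : ℕ) :
    parkingNumber (n + 1) = ∑ ij ∈ antidiagonal n,
      n.choose ij.1 * parkingNumber ij.1 * parkingNumber ij.2 * (ij.1 + 1) := by
  have abel := abel_identity n ((n : ℝ) + 1)
  rw [← Nat.sum_antidiagonal_eq_sum_range_succ
    (fun i j ↦ (n.choose i : ℝ) * (i + 1) ^ (i - 1) * ((n : ℝ) + 1 - i) ^ j) n] at abel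
  rw [parkingNumber, Nat.cast_succ, Nat.add_sub_cancel, ← abel, ← Nat.sum_antidiagonal_swap]
  refine sum_congr rfl fun ij hij ↦ ?_
  obtain rfl := mem_antidiagonal.1 hij
  have hsub : ((ij.1 + ij.2 : ℕ) : ℝ) + 1 - ij.2 = ij.1 + 1 := by push_cast; ring
  simp only [Prod.fst_swap, Prod.snd_swap]
  rw [hsub, ← parkingNumber_mul_succ, ← Nat.choose_symm_add, parkingNumber, parkingNumber]
  ring

end ParkingNumber

section InsertionWeight

variable {α R : Type*} [DecidableEq α] [CommSemiring R] {w : Finset α → α → R}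

/-- The sum, over all orders in which the elements of `S` can be inserted into the empty set one
at a time, of the products of the weights `w A s` of inserting `s` into the current set `A`. -/
def insertionWeight (w : Finset α → α → R) (S : Finset α) : R :=
  if S = ∅ then 1 else ∑ s : S, insertionWeight w (S.erase s) * w (S.erase s) s
termination_by #S
decreasing_by exact card_erase_lt_of_mem s.2

@[simp]
theorem insertionWeight_empty : insertionWeight w ∅ = 1 := by
  rw [insertionWeight, if_pos rfl]

theorem insertionWeight_of_nonempty {S : Finset α} (hS : S.Nonempty) :
    insertionWeight w S = ∑ s ∈ S, insertionWeight w (S.erase s) * w (S.erase s) s := by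
  rw [insertionWeight, if_neg hS.ne_empty, ← sum_coe_sort S]

theorem insertionWeight_union {S₁ S₂ : Finset α} (hdisj : Disjoint S₁ S₂)
    (h₁ : ∀ A ⊆ S₁, ∀ B ⊆ S₂, ∀ s ∈ S₁, w (A ∪ B) s = w A s)
    (h₂ : ∀ A ⊆ S₁, ∀ B ⊆ S₂, ∀ s ∈ S₂, w (A ∪ B) s = w B s) :
    insertionWeight w (S₁ ∪ S₂) =
      (#S₁ + #S₂).choose #S₁ * insertionWeight w S₁ * insertionWeight w S₂ := by
  induction hcard : #S₁ + #S₂ generalizing S₁ S₂ with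
  | zero =>
    obtain ⟨rfl, rfl⟩ : S₁ = ∅ ∧ S₂ = ∅ := by simpa using hcard
    simp
  | succ k ih =>
    obtain rfl | hS₁ := S₁.eq_empty_or_nonempty
    · simp
    obtain rfl | hS₂ := S₂.eq_empty_or_nonempty
    · simp [← hcard]
    obtain ⟨a, ha⟩ := Nat.exists_eq_succ_of_ne_zero hS₁.card_ne_zero
    have sum₁ : ∑ s ∈ S₁, insertionWeight w ((S₁ ∪ S₂).erase s) * w ((S₁ ∪ S₂).erase s) s =
        k.choose a * insertionWeight w S₁ * insertionWeight w S₂ := by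
      rw [insertionWeight_of_nonempty hS₁, mul_sum, sum_mul]
      refine sum_congr rfl fun s hs ↦ ?_
      have hsub := erase_subset s S₁
      have hcard_erase : #(S₁.erase s) = a := by rw [card_erase_of_mem hs, ha]; rfl
      rw [erase_union_distrib, erase_eq_of_notMem (disjoint_left.1 hdisj hs),
        h₁ _ hsub _ subset_rfl s hs,
        ih (hdisj.mono_left hsub) (fun A hA B hB t ht ↦ h₁ A (hA.trans hsub) B hB t (hsub ht))
          (fun A hA ↦ h₂ A (hA.trans hsub)) (by omega), hcard_erase]
      ring
    have sum₂ : ∑ s ∈ S₂, insertionWeight w ((S₁ ∪ S₂).erase s) * w ((S₁ ∪ S₂).erase s) s =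
        k.choose (a + 1) * insertionWeight w S₁ * insertionWeight w S₂ := by
      rw [insertionWeight_of_nonempty hS₂, mul_sum]
      refine sum_congr rfl fun s hs ↦ ?_
      have hsub := erase_subset s S₂
      have hcard_erase := card_erase_add_one hs
      rw [erase_union_distrib, erase_eq_of_notMem (disjoint_right.1 hdisj hs),
        h₂ _ subset_rfl _ hsub s hs,
        ih (hdisj.mono_right hsub) (fun A hA B hB ↦ h₁ A hA B (hB.trans hsub))
          (fun A hA B hB t ht ↦ h₂ A hA B (hB.trans hsub) t (hsub ht)) (by omega), ha]
      ring
    rw [insertionWeight_of_nonempty (hS₁.mono subset_union_left), sum_union hdisj, sum₁, sum₂, ha,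
      Nat.choose_succ_succ]
    push_cast
    ring

theorem sum_powersetCard_sum_sdiff (U : Finset α) (k : ℕ) (f : Finset α → α → R) :
    ∑ S ∈ U.powersetCard k, ∑ s ∈ U \ S, f S s =
      ∑ S ∈ U.powersetCard (k + 1), ∑ s ∈ S, f (S.erase s) s := by
  rw [sum_sigma', sum_sigma']
  refine sum_bij' (fun x _ ↦ ⟨insert x.2 x.1, x.2⟩) (fun x _ ↦ ⟨x.1.erase x.2, x.2⟩)
    (by grind) (by grind) ?_ ?_ ?_ <;>
  · rintro ⟨S, s⟩ h
    simp only [mem_sigma, mem_powersetCard, mem_sdiff] at h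
    simp [h]

theorem insertionWeight_eq_of_forward_recurrence {U : Finset α} {F : ℕ → Finset α → R}
    (hzero : F 0 U = 1)
    (hsucc : ∀ k, ∀ S ⊆ U, F (k + 1) S = ∑ s ∈ U \ S, w S s * F k (insert s S)) :
    insertionWeight w U = F #U ∅ := by
  have sum_level (j k : ℕ) :
      ∑ S ∈ U.powersetCard j, insertionWeight w S * F k S = F (k + j) ∅ := by
    induction j generalizing k with
    | zero => simp
    | succ j ih =>
      calc
        _ = ∑ S ∈ U.powersetCard (j + 1), ∑ s ∈ S, insertionWeight w (S.erase s) *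
              (w (S.erase s) s * F k (insert s (S.erase s))) := by
          refine sum_congr rfl fun S hS ↦ ?_
          have hne : S.Nonempty := by
            rw [← card_pos, (mem_powersetCard.1 hS).2]
            exact j.succ_pos
          rw [insertionWeight_of_nonempty hne, sum_mul]
          exact sum_congr rfl fun s hs ↦ by rw [insert_erase hs, mul_assoc]
        _ = ∑ S ∈ U.powersetCard j, ∑ s ∈ U \ S,
              insertionWeight w S * (w S s * F k (insert s S)) :=
          (sum_powersetCard_sum_sdiff U j fun S s ↦
            insertionWeight w S * (w S s * F k (insert s S))).symm
        _ = ∑ S ∈ U.powersetCard j, insertionWeight w S * F (k + 1) S := by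
          refine sum_congr rfl fun S hS ↦ ?_
          rw [hsucc k S (mem_powersetCard.1 hS).1, mul_sum]
        _ = F (k + (j + 1)) ∅ := by rw [ih, Nat.add_right_comm, Nat.add_assoc]
  simpa [hzero] using sum_level #U 0

end InsertionWeight

section Landing

variable (p : ℝ)

/-- The preferences `a ≥ 1` with which a car arriving at the occupied set `S` parks in the free
spot `s`, when it does (`back = true`) or does not (`back = false`) back up on a collision. -/
def landingPrefs (S : Finset ℕ) (s : ℕ) (back : Bool) : Finset ℕ :=
  {a ∈ Icc 1 (s + 1) | (a ≤ s ∧ Ico a s ⊆ S ∧ (back → a = s ∨ a = 1 ∨ a - 1 ∈ S)) ∨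
    (back ∧ a = s + 1 ∧ a ∈ S)}

/-- The expected number of preferences with which a car arriving at the occupied set `S` parks in
the free spot `s`, when it backs up on a collision with probability `p`. -/
def landingWeight (S : Finset ℕ) (s : ℕ) : ℝ :=
  p * #(landingPrefs S s true) + (1 - p) * #(landingPrefs S s false)

theorem landingPrefs_union_left {A B : Finset ℕ} {s : ℕ} (hB : ∀ x ∈ B, s + 1 < x) (back : Bool) :
    landingPrefs (A ∪ B) s back = landingPrefs A s back := by
  have mem_iff {x : ℕ} (hx : x ≤ s + 1) : x ∈ A ∪ B ↔ x ∈ A := by grind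
  have subset_iff (a : ℕ) : Ico a s ⊆ A ∪ B ↔ Ico a s ⊆ A :=
    forall₂_congr fun x hx ↦ mem_iff ((mem_Ico.1 hx).2.le.trans s.le_succ)
  refine filter_congr fun a ha ↦ ?_
  have ha' := (mem_Icc.1 ha).2
  rw [subset_iff, mem_iff ha', mem_iff ((a.sub_le 1).trans ha')]

theorem landingPrefs_union_right {A B : Finset ℕ} {c s : ℕ} (hA : ∀ x ∈ A, x < c) (hc : c ∉ B)
    (hs : c < s) (back : Bool) :
    landingPrefs (A ∪ B) s back = landingPrefs B s back := by
  have mem_iff {x : ℕ} (hx : c ≤ x) : x ∈ A ∪ B ↔ x ∈ B := by grind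
  refine filter_congr fun a _ ↦ ?_
  rcases lt_or_ge c a with ha | ha
  · have subset_iff : Ico a s ⊆ A ∪ B ↔ Ico a s ⊆ B :=
      forall₂_congr fun x hx ↦ mem_iff (ha.le.trans (mem_Ico.1 hx).1)
    rw [subset_iff, mem_iff ha.le, mem_iff (Nat.le_sub_one_of_lt ha)]
  · have not_subset (X : Finset ℕ) (hX : c ∉ X) : ¬Ico a s ⊆ X := fun h ↦
      hX (h (mem_Ico.2 ⟨ha, hs⟩))
    have hcA : c ∉ A ∪ B := by rwa [mem_iff le_rfl]
    have hne : a ≠ s + 1 := by omega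
    simp [not_subset _ hc, not_subset _ hcA, hne]

theorem insertionWeight_landingWeight_union {c : ℕ} {S₁ S₂ : Finset ℕ}
    (h₁ : ∀ x ∈ S₁, x < c) (h₂ : ∀ x ∈ S₂, c < x) :
    insertionWeight (landingWeight p) (S₁ ∪ S₂) = (#S₁ + #S₂).choose #S₁ *
      insertionWeight (landingWeight p) S₁ * insertionWeight (landingWeight p) S₂ := by
  refine insertionWeight_union ?_ (fun A _ B hB s hs ↦ ?_) (fun A hA B hB s hs ↦ ?_)
  · exact disjoint_left.2 fun x hx₁ hx₂ ↦ (h₁ x hx₁).asymm (h₂ x hx₂)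
  · have hB' : ∀ x ∈ B, s + 1 < x := fun x hx ↦ Nat.lt_of_le_of_lt (h₁ s hs) (h₂ x (hB hx))
    simp only [landingWeight, landingPrefs_union_left hB']
  · have hA' : ∀ x ∈ A, x < c := fun x hx ↦ h₁ x (hA hx)
    have hc : c ∉ B := fun hc ↦ (h₂ c (hB hc)).false
    simp only [landingWeight, landingPrefs_union_right hA' hc (h₂ s hs)]

theorem Ico_subset_erase_Ico_iff {a c i m : ℕ} (hi : i ≤ m) :
    Ico a (c + i) ⊆ (Ico c (c + m)).erase (c + i) ↔ c ≤ a := by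
  refine ⟨fun h ↦ ?_, by grind⟩
  by_contra! hac
  have ha : a ∈ (Ico c (c + m)).erase (c + i) := h (mem_Ico.2 ⟨le_rfl, by omega⟩)
  grind

theorem landingPrefs_erase_Ico_false {c i m : ℕ} (hc : 1 ≤ c) (hi : i < m) :
    landingPrefs ((Ico c (c + m)).erase (c + i)) (c + i) false = Icc c (c + i) := by
  ext a
  simp only [landingPrefs, mem_filter, mem_Icc]
  grind [Ico_subset_erase_Ico_iff]

theorem landingPrefs_erase_Ico_one_true {i m : ℕ} (hi : i < m) :
    landingPrefs ((Ico 1 (1 + m)).erase (1 + i)) (1 + i) true =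
      Icc 1 (1 + i + min 1 (m - 1 - i)) := by
  ext a
  simp only [landingPrefs, mem_filter, mem_Icc]
  grind [Ico_subset_erase_Ico_iff]

theorem landingPrefs_erase_Ico_true {c i m : ℕ} (hc : 2 ≤ c) (hi : i < m) :
    landingPrefs ((Ico c (c + m)).erase (c + i)) (c + i) true =
      Icc (c + min 1 i) (c + i + min 1 (m - 1 - i)) := by
  ext a
  simp only [landingPrefs, mem_filter, mem_Icc]
  grind [Ico_subset_erase_Ico_iff]

theorem landingWeight_erase_Ico_one (i j : ℕ) :
    landingWeight p ((Ico 1 (1 + (i + j + 1))).erase (1 + i)) (1 + i) =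
      i + 1 + p * (min 1 j : ℕ) := by
  have hi : i < i + j + 1 := by omega
  have hcard : 1 + i + min 1 j + 1 - 1 = i + 1 + min 1 j := by omega
  rw [landingWeight, landingPrefs_erase_Ico_one_true hi, landingPrefs_erase_Ico_false le_rfl hi,
    Nat.add_sub_cancel, Nat.add_sub_cancel_left, Nat.card_Icc, Nat.card_Icc, hcard,
    Nat.add_sub_cancel, add_comm 1 i]
  push_cast
  ring

theorem landingWeight_erase_Ico_of_two_le {c : ℕ} (hc : 2 ≤ c) (i j : ℕ) :
    landingWeight p ((Ico c (c + (i + j + 1))).erase (c + i)) (c + i) =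
      i + 1 + p * ((min 1 j : ℕ) - (min 1 i : ℕ)) := by
  have hi : i < i + j + 1 := by omega
  have hcard_true : ((c + i + min 1 j + 1 - (c + min 1 i) : ℕ) : ℝ) =
      i + 1 + (min 1 j : ℕ) - (min 1 i : ℕ) := by
    rw [Nat.cast_sub (by omega)]
    push_cast
    ring
  have hcard_false : c + i + 1 - c = i + 1 := by omega
  rw [landingWeight, landingPrefs_erase_Ico_true hc hi,
    landingPrefs_erase_Ico_false (one_le_two.trans hc) hi, Nat.add_sub_cancel,
    Nat.add_sub_cancel_left, Nat.card_Icc, Nat.card_Icc, hcard_true, hcard_false]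
  push_cast
  ring

theorem insertionWeight_Ico_succ (c n : ℕ) :
    insertionWeight (landingWeight p) (Ico c (c + (n + 1))) = ∑ ij ∈ antidiagonal n,
      n.choose ij.1 * insertionWeight (landingWeight p) (Ico c (c + ij.1)) *
        insertionWeight (landingWeight p) (Ico (c + ij.1 + 1) (c + ij.1 + 1 + ij.2)) *
          landingWeight p ((Ico c (c + (n + 1))).erase (c + ij.1)) (c + ij.1) := by
  have split (i : ℕ) (hi : i ∈ range (n + 1)) :
      insertionWeight (landingWeight p) ((Ico c (c + (n + 1))).erase (c + i)) =
        n.choose i * insertionWeight (landingWeight p) (Ico c (c + i)) *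
          insertionWeight (landingWeight p) (Ico (c + i + 1) (c + i + 1 + (n - i))) := by
    have hin := Nat.add_sub_cancel' (mem_range_succ_iff.1 hi)
    have herase : (Ico c (c + (n + 1))).erase (c + i) =
        Ico c (c + i) ∪ Ico (c + i + 1) (c + i + 1 + (n - i)) := by grind
    rw [herase, insertionWeight_landingWeight_union p (c := c + i) (by simp) (by simp; omega),
      Nat.card_Ico, Nat.card_Ico, Nat.add_sub_cancel_left, Nat.add_sub_cancel_left, hin]
  rw [insertionWeight_of_nonempty (nonempty_Ico.2 (by omega)), sum_Ico_eq_sum_range,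
    Nat.add_sub_cancel_left, Nat.sum_antidiagonal_eq_sum_range_succ_mk]
  exact sum_congr rfl fun i hi ↦ by rw [split i hi]

theorem insertionWeight_Ico_of_two_le {c : ℕ} (hc : 2 ≤ c) (n : ℕ) :
    insertionWeight (landingWeight p) (Ico c (c + n)) = parkingNumber n := by
  induction n using Nat.strong_induction_on generalizing c with
  | _ n ih =>
  rcases n with _ | n
  · simp
  set F : ℕ × ℕ → ℝ := fun ij ↦ n.choose ij.1 * parkingNumber ij.1 * parkingNumber ij.2 with hF
  have symm : ∑ ij ∈ antidiagonal n, F ij * (min 1 ij.2 : ℕ) =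
      ∑ ij ∈ antidiagonal n, F ij * (min 1 ij.1 : ℕ) := by
    rw [← Nat.sum_antidiagonal_swap]
    refine sum_congr rfl fun ij hij ↦ ?_
    obtain rfl := mem_antidiagonal.1 hij
    simp only [hF, Prod.fst_swap, Prod.snd_swap, ← Nat.choose_symm_add]
    ring
  calc
    _ = ∑ ij ∈ antidiagonal n,
          F ij * (ij.1 + 1 + p * ((min 1 ij.2 : ℕ) - (min 1 ij.1 : ℕ))) := by
      rw [insertionWeight_Ico_succ]
      refine sum_congr rfl fun ij hij ↦ ?_
      obtain rfl := mem_antidiagonal.1 hij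
      rw [ih _ (by omega) hc, ih _ (by omega) (by omega), landingWeight_erase_Ico_of_two_le p hc]
    _ = ∑ ij ∈ antidiagonal n, F ij * (ij.1 + 1) + p * (
          ∑ ij ∈ antidiagonal n, F ij * (min 1 ij.2 : ℕ) -
            ∑ ij ∈ antidiagonal n, F ij * (min 1 ij.1 : ℕ)) := by
      rw [← sum_sub_distrib, mul_sum, ← sum_add_distrib]
      exact sum_congr rfl fun ij _ ↦ by ring
    _ = parkingNumber (n + 1) := by
      rw [symm, sub_self, mul_zero, add_zero, parkingNumber_succ]

theorem insertionWeight_Ico_one_succ (n : ℕ) :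
    insertionWeight (landingWeight p) (Ico 1 (1 + (n + 1))) = ∑ ij ∈ antidiagonal n,
      n.choose ij.1 * insertionWeight (landingWeight p) (Ico 1 (1 + ij.1)) *
        parkingNumber ij.2 * (ij.1 + 1 + p * (min 1 ij.2 : ℕ)) := by
  rw [insertionWeight_Ico_succ]
  refine sum_congr rfl fun ij hij ↦ ?_
  obtain rfl := mem_antidiagonal.1 hij
  rw [insertionWeight_Ico_of_two_le p (c := 1 + ij.1 + 1) (by omega), landingWeight_erase_Ico_one]

end Landing

section Simulation

theorem firstFree_range'_eq_some_iff_s15 {occ : Finset ℕ} {a m s : ℕ} :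
    firstFree occ (List.range' (a + 1) m) = some s ↔
      s ∉ occ ∧ a < s ∧ s ≤ a + m ∧ Ioo a s ⊆ occ := by
  rw [firstFree, List.find?_range'_eq_some]
  simp only [decide_eq_true_eq, List.mem_range'_1, Bool.not_eq_true', decide_eq_false_iff_not,
    not_not]
  grind

theorem naplesStep_one_eq (n : ℕ) (occ : Finset ℕ) (a : ℕ) (back : Bool) :
    naplesStep n 1 occ a back =
      if a ∉ occ then some a
      else if back ∧ 2 ≤ a ∧ a - 1 ∉ occ then some (a - 1)
      else firstFree occ (List.range' (a + 1) (n - a)) := by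
  rcases back with _ | _
  · simp [naplesStep]
  rcases lt_or_ge a 2 with ha | ha
  · simp [naplesStep, firstFree, Nat.sub_eq_zero_of_le (Nat.le_of_lt_succ ha), ha.not_ge]
  · have hmax : max (a - 1) 1 = a - 1 := by omega
    have hmin : min 1 (a - 1) = 1 := by omega
    by_cases hfree : a - 1 ∈ occ <;> simp [naplesStep, firstFree, hmax, hmin, ha, hfree]

theorem naplesStep_one_eq_some_iff {n : ℕ} {occ : Finset ℕ} {a s : ℕ} {back : Bool} (ha₁ : 1 ≤ a)
    (han : a ≤ n) :
    naplesStep n 1 occ a back = some s ↔ s ∈ Icc 1 n \ occ ∧ a ∈ landingPrefs occ s back := by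
  have firstFree_iff (ha : a ∈ occ) : firstFree occ (List.range' (a + 1) (n - a)) = some s ↔
      s ∈ Icc 1 n \ occ ∧ a ≤ s ∧ Ico a s ⊆ occ := by
    rw [firstFree_range'_eq_some_iff_s15, Nat.add_sub_cancel' han]
    grind
  rw [naplesStep_one_eq, landingPrefs, mem_filter]
  split_ifs with ha hback
  · grind
  · rw [firstFree_iff ha]
    grind
  · grind

theorem card_filter_naplesStep_one {n : ℕ} {occ : Finset ℕ} (hocc : occ ⊆ Icc 1 n) {s : ℕ}
    (hs : s ∈ Icc 1 n \ occ) (back : Bool) :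
    #{a : Fin n | naplesStep n 1 occ (a.1 + 1) back = some s} = #(landingPrefs occ s back) := by
  have step_iff (a : Fin n) :
      naplesStep n 1 occ (a.1 + 1) back = some s ↔ a.1 + 1 ∈ landingPrefs occ s back := by
    rw [naplesStep_one_eq_some_iff (Nat.le_add_left _ _) a.2]
    exact and_iff_right hs
  have le_of_mem {a : ℕ} (ha : a ∈ landingPrefs occ s back) : 1 ≤ a ∧ a ≤ n := by
    simp only [landingPrefs, mem_filter] at ha
    grind
  refine card_bij (fun a _ ↦ a.1 + 1) (fun a ha ↦ ?_) (fun a _ b _ h ↦ ?_) (fun a ha ↦ ?_)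
  · exact (step_iff a).1 (mem_filter.1 ha).2
  · exact Fin.ext (Nat.succ_injective h)
  · obtain ⟨ha₁, han⟩ := le_of_mem ha
    have hpred := Nat.sub_add_cancel ha₁
    refine ⟨⟨a - 1, by omega⟩, mem_filter.2 ⟨mem_univ _, (step_iff _).2 ?_⟩, hpred⟩
    rwa [hpred]

/-- The probability that `k` cars, following `step` with coins of bias `p`, all park when the set
`occ` is already occupied, summed over all preferences of these cars in `1, …, n`. -/
def parkSum (step : Finset ℕ → ℕ → Bool → Option ℕ) (p : ℝ) (n k : ℕ) (occ : Finset ℕ) : ℝ :=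
  ∑ α : Fin k → Fin n, ∑ b : Fin k → Bool, (∏ i, if b i then p else 1 - p) *
    (if runPark step (List.ofFn fun i ↦ ((α i).1 + 1, b i)) occ then 1 else 0)

theorem T_eq_parkSum (k : ℕ) (p : ℝ) (n : ℕ) : T k p n = parkSum (naplesStep n k) p n n ∅ := rfl

theorem parkSum_zero {step : Finset ℕ → ℕ → Bool → Option ℕ} (p : ℝ) (n : ℕ)
    (occ : Finset ℕ) : parkSum step p n 0 occ = 1 := by
  simp [parkSum, runPark]

theorem parkSum_succ {step : Finset ℕ → ℕ → Bool → Option ℕ} (p : ℝ) (n k : ℕ)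
    (occ : Finset ℕ) :
    parkSum step p n (k + 1) occ = ∑ a : Fin n, ∑ b : Bool, (if b then p else 1 - p) *
      (step occ (a.1 + 1) b).elim 0 fun s ↦ parkSum step p n k (insert s occ) := by
  have sum_cons {β : Type} [Fintype β] (f : (Fin (k + 1) → β) → ℝ) :
      ∑ x, f x = ∑ x₀, ∑ x, f (Fin.cons x₀ x) := by
    rw [← (Fin.consEquiv fun _ ↦ β).sum_comp, Fintype.sum_prod_type]
    rfl
  rw [parkSum, sum_cons]
  refine sum_congr rfl fun a _ ↦ ?_
  simp_rw [sum_cons (β := Bool)]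
  rw [sum_comm]
  refine sum_congr rfl fun b _ ↦ ?_
  simp only [List.ofFn_succ, Fin.cons_zero, Fin.cons_succ, Fin.prod_univ_succ, runPark]
  rcases step occ (a.1 + 1) b with _ | s
  · simp
  · simp only [Option.elim_some, parkSum, mul_sum, mul_assoc]

theorem parkSum_naplesStep_one_succ (p : ℝ) {n : ℕ} (k : ℕ) {occ : Finset ℕ}
    (hocc : occ ⊆ Icc 1 n) :
    parkSum (naplesStep n 1) p n (k + 1) occ = ∑ s ∈ Icc 1 n \ occ,
      landingWeight p occ s * parkSum (naplesStep n 1) p n k (insert s occ) := by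
  set F : ℕ → ℝ := fun s ↦ parkSum (naplesStep n 1) p n k (insert s occ) with hF
  have elim_eq (a : Fin n) (b : Bool) : (naplesStep n 1 occ (a.1 + 1) b).elim 0 F =
      ∑ s ∈ Icc 1 n \ occ, if naplesStep n 1 occ (a.1 + 1) b = some s then F s else 0 := by
    rcases h : naplesStep n 1 occ (a.1 + 1) b with _ | s
    · simp
    · have hs := ((naplesStep_one_eq_some_iff (Nat.le_add_left _ _) a.2).1 h).1
      simp only [Option.elim_some, Option.some.injEq]
      rw [sum_ite_eq, if_pos hs]
  have landingWeight_eq (s : ℕ) (hs : s ∈ Icc 1 n \ occ) :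
      landingWeight p occ s = ∑ b : Bool, (if b then p else 1 - p) *
        #{a : Fin n | naplesStep n 1 occ (a.1 + 1) b = some s} := by
    simp [card_filter_naplesStep_one hocc hs, landingWeight]
  calc
    _ = ∑ b : Bool, (if b then p else 1 - p) * ∑ a : Fin n, ∑ s ∈ Icc 1 n \ occ,
          if naplesStep n 1 occ (a.1 + 1) b = some s then F s else 0 := by
      simp_rw [parkSum_succ, ← hF, elim_eq, mul_sum]
      exact sum_comm
    _ = ∑ b : Bool, (if b then p else 1 - p) * ∑ s ∈ Icc 1 n \ occ,
          #{a : Fin n | naplesStep n 1 occ (a.1 + 1) b = some s} * F s := by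
      refine sum_congr rfl fun b _ ↦ ?_
      rw [sum_comm]
      simp only [← sum_filter, sum_const, nsmul_eq_mul]
    _ = ∑ s ∈ Icc 1 n \ occ, landingWeight p occ s * F s := by
      simp_rw [mul_sum]
      rw [sum_comm]
      refine sum_congr rfl fun s hs ↦ ?_
      simp_rw [landingWeight_eq s hs, sum_mul, mul_assoc]

theorem T_one_eq_insertionWeight (p : ℝ) (n : ℕ) :
    T 1 p n = insertionWeight (landingWeight p) (Ico 1 (1 + n)) := by
  have h := insertionWeight_eq_of_forward_recurrence (w := landingWeight p)
    (parkSum_zero p n (Icc 1 n)) fun k _ hS ↦ parkSum_naplesStep_one_succ p k hS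
  rw [T_eq_parkSum, add_comm 1 n, Ico_add_one_right_eq_Icc, h, Nat.card_Icc, Nat.add_sub_cancel]

theorem T_one_zero (p : ℝ) : T 1 p 0 = 1 := parkSum_zero p 0 ∅

theorem T_one_succ (p : ℝ) (n : ℕ) :
    T 1 p (n + 1) = ∑ ij ∈ antidiagonal n,
      n.choose ij.1 * T 1 p ij.1 * parkingNumber ij.2 * (ij.1 + 1 + p * (min 1 ij.2 : ℕ)) := by
  simp_rw [T_one_eq_insertionWeight, insertionWeight_Ico_one_succ]

theorem Nnum_eq_T (n : ℕ) : (Nnum n : ℝ) = T 1 1 n := by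
  rw [Nnum, T, card_filter]
  push_cast
  refine sum_congr rfl fun α _ ↦ ?_
  rw [probNaples, sum_eq_single fun _ ↦ true]
  · simp only [naplesParks, if_true, prod_const_one, one_mul]
    congr
  · intro b _ hb
    obtain ⟨i, hi⟩ := Function.ne_iff.1 hb
    rw [prod_eq_zero (mem_univ i) (by simp [Bool.eq_false_of_not_eq_true hi]), zero_mul]
  · simp

end Simulation

section Bounds

variable {p : ℝ} (n : ℕ)

theorem parkingNumber_le_T_one (hp₀ : 0 ≤ p) : parkingNumber n ≤ T 1 p n := by
  induction n using Nat.strong_induction_on with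
  | _ n ih =>
  rcases n with _ | n
  · rw [T_one_zero, parkingNumber_zero]
  rw [T_one_succ, parkingNumber_succ]
  refine sum_le_sum fun ij hij ↦ ?_
  have hle := ih ij.1 (Nat.antidiagonal.fst_lt hij)
  have hT := (parkingNumber_pos ij.1).le.trans hle
  have hP := (parkingNumber_pos ij.2).le
  have hgain : 0 ≤ p * (min 1 ij.2 : ℕ) := by positivity
  refine mul_le_mul ?_ (le_add_of_nonneg_right hgain) (by positivity) (by positivity)
  gcongr

theorem T_one_le (hp₀ : 0 ≤ p) (hp₁ : p ≤ 1) :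
    T 1 p n ≤ p * T 1 1 n + (1 - p) * parkingNumber n := by
  induction n using Nat.strong_induction_on with
  | _ n ih =>
  rcases n with _ | n
  · simp [T_one_zero]
  rw [T_one_succ, T_one_succ, parkingNumber_succ, mul_sum, mul_sum, ← sum_add_distrib]
  refine sum_le_sum fun ij hij ↦ ?_
  set m : ℝ := ((min 1 ij.2 : ℕ) : ℝ)
  have hle := ih ij.1 (Nat.antidiagonal.fst_lt hij)
  have hP := (parkingNumber_pos ij.2).le
  have hchord : T 1 p ij.1 * (ij.1 + 1 + p * m) ≤
      p * (T 1 1 ij.1 * (ij.1 + 1 + 1 * m)) + (1 - p) * (parkingNumber ij.1 * (ij.1 + 1)) := by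
    have hgap : 0 ≤ p * (1 - p) * m * (T 1 1 ij.1 - parkingNumber ij.1) :=
      mul_nonneg (mul_nonneg (mul_nonneg hp₀ (sub_nonneg.2 hp₁)) (Nat.cast_nonneg _))
        (sub_nonneg.2 (parkingNumber_le_T_one ij.1 zero_le_one))
    linear_combination (ij.1 + 1 + p * m) * hle + hgap
  linear_combination (n.choose ij.1 * parkingNumber ij.2 : ℝ) * hchord

end Bounds

theorem stmt15_general {p : ℝ} (hp₀ : 0 ≤ p) (hp₁ : p ≤ 1) (n : ℕ) :
    ((n : ℝ) + 1) ^ (n - 1) ≤ T 1 p n ∧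
    T 1 p n ≤ p * Nnum n + (1 - p) * ((n : ℝ) + 1) ^ (n - 1) := by
  rw [Nnum_eq_T]
  exact ⟨parkingNumber_le_T_one n hp₀, T_one_le n hp₀ hp₁⟩

/-- `P(n) ≤ T(n) ≤ (N(n) + P(n))/2`, where `P(n) = (n+1)^(n-1)` is the number of parking
functions, `N(n)` the number of 1-Naples parking functions, and `T(n)` the expected number
of random 1-Naples parking functions with `p = 1/2`. -/
theorem stmt15 (n : ℕ) (hn : 1 ≤ n) :
    ((n : ℝ) + 1) ^ (n - 1) ≤ T 1 (1/2) n ∧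
    T 1 (1/2) n ≤ ((Nnum n : ℝ) + ((n : ℝ) + 1) ^ (n - 1)) / 2 := by
  obtain ⟨hlower, hupper⟩ := stmt15_general (p := 1 / 2) (by norm_num) (by norm_num) n
  exact ⟨hlower, hupper.trans_eq (by ring)⟩
end
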